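/- Let m ≥ 1, 0 < s < 1, 1 ≤ p < ∞, d ∈ {1,…,m} with d > sp, η > 0, 0 < μ̲ < μ < μ̄ < 1 and 0 < τ < μ̲/μ. Set B₁ = B^d_{τμη} × Q^{m−d}_{(1−μ̄)η}, Q₂ = Q^d_{μ̲η} × Q^{m−d}_{(1−μ̄)η} and Q₃ = Q^d_{μη} × Q^{m−d}_{(1−μ)η}. Then there exists a smooth injective map Φ : ℝ^m → ℝ^m of the form Φ(x′, x″) = (λ(x) x′, x″) with λ : ℝ^m → [1, +∞), such that Supp Φ ⊂ Q₃ and Φ(B₁) ⊃ Q₂, and with the following property: for all c, c′ > 0 there is a constant C > 0, depending only on m, s, p, c, c′, μ̲/μ and μ/μ̄, such that for every measurable set ω with Q₂ ⊂ ω ⊂ B^m_{cμη} satisfying |B^m_λ(z) ∩ (ω \ Q₂)| ≥ c′ λ^m for every z ∈ ω \ Q₂ and 0 < λ ≤ (1/2) diam ω, and every measurable u : ω → ℝ^ν (with Φ(Φ^{-1}(ω)) ⊂ ω), one has |u ∘ Φ|_{W^{s,p}(Φ^{-1}(ω))} ≤ C |u|_{W^{s,p}(ω \ Q₂)} + C τ^{(d−sp)/p}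 |u|_{W^{s,p}(ω)} and ‖u ∘ Φ‖_{L^p(Φ^{-1}(ω))} ≤ C ‖u‖_{L^p(ω \ Q₂)} + C τ^{d/p} ‖u‖_{L^p(ω)}. -/

import Mathlib

open MeasureTheory Set Metric
open scoped ENNReal
noncomputable section

/-- `ℝ^m` with the Euclidean norm. -/
abbrev Eucl (n : ℕ) : Type := EuclideanSpace ℝ (Fin n)

/-- The `p`-th power of the Gagliardo seminorm. -/
noncomputable def gagliardoPow {α : Type*} [NormedAddCommGroup α] (m : ℕ) (σ p : ℝ)
    (A : Set (Eucl m)) (u : Eucl m → α) : ℝ≥0∞ :=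
  ∫⁻ x in A, ∫⁻ y in A, (‖u x - u y‖₊ : ℝ≥0∞) ^ p / (‖x - y‖₊ : ℝ≥0∞) ^ ((m : ℝ) + σ * p)

/-- The Gagliardo seminorm `|u|_{W^{σ,p}(A)}`. -/
noncomputable def gagliardoSeminorm {α : Type*} [NormedAddCommGroup α] (m : ℕ) (σ p : ℝ)
    (A : Set (Eucl m)) (u : Eucl m → α) : ℝ≥0∞ :=
  gagliardoPow m σ p A u ^ (1 / p)

/-- The product `Q^d_a × Q^{m-d}_b` of open cubes. -/
def rect (m d : ℕ) (a b : ℝ) : Set (Eucl m) :=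
  {x : Eucl m | ∀ i : Fin m, ((i : ℕ) < d → |x i| < a) ∧ (d ≤ (i : ℕ) → |x i| < b)}

/-- The Euclidean norm `|x′|` of the first `d` coordinates of `x ∈ ℝ^m`. -/
noncomputable def headNorm (m d : ℕ) (x : Eucl m) : ℝ :=
  Real.sqrt (∑ i : Fin m, if (i : ℕ) < d then x i ^ 2 else 0)

/-- The cylinder `B^d_a × Q^{m-d}_b`. -/
def cylinder (m d : ℕ) (a b : ℝ) : Set (Eucl m) :=
  {x : Eucl m | headNorm m d x < a ∧ ∀ i : Fin m, d ≤ (i : ℕ) → |x i| < b}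

/-!
Let `f` be a smooth profile equal to a tiny `δ` on the block, equal to `1` off the larger rectangle
and increasing in a gauge of `x'`. For `n` large, `Ψ(x', x'') = (f(x)^n x', x'')` is a
diffeomorphism, and `Φ = Ψ⁻¹` expands a thin cylinder onto the block. Change variables by `Ψ`: the
Jacobian `≲ f^(nd-1)` beats the growth of `|Ψ x - Ψ y|^(-(m+sp))`, which is at most a negative
power of `f` times an anisotropic kernel `|H|^(-β) ∏ |Hᵢ|^(-γᵢ)` in `H = x - y`. Splitting
`m + sp = β + ∑ γᵢ` with `β` slightly above `d + sp < 2d` and `γᵢ < 1` on the last `m - d`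
coordinates leaves a spare factor `f`, hence `δ` on the block. The anisotropic energy is in turn
controlled by the isotropic one: average `|u x - u y|^p ≲ |u x - u z|^p + |u z - u y|^p` over `z` in
the part of `ω \ Q₂` (or of the block) in a ball of radius `|x - y| / 2`, which is large because
these sets are thick; then integrate out the kernel, whose singularities are integrable.
-/

namespace ShrinkingBlock

open scoped NNReal Topology

theorem integrable_one_add_abs_rpow_mul_abs_rpow {e g : ℝ} (he : 1 < e) (hg0 : 0 ≤ g)
    (hg1 : g < 1) : Integrable fun t : ℝ => (1 + |t|) ^ (-e) * |t| ^ (-g) := by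
  have hmeas : AEStronglyMeasurable (fun t : ℝ => (1 + |t|) ^ (-e) * |t| ^ (-g)) :=
    (by fun_prop : Measurable _).aestronglyMeasurable
  have hnorm (t : ℝ) : ‖(1 + |t|) ^ (-e) * |t| ^ (-g)‖ = (1 + |t|) ^ (-e) * |t| ^ (-g) :=
    Real.norm_of_nonneg (by positivity)
  rw [← integrableOn_univ, ← union_compl_self (ball (0 : ℝ) 1), integrableOn_union]
  constructor
  · refine integrableOn_ball_of_norm_le_rpow (C := 1) (α := g) (by simp) (by simpa using hg1)
      (ae_of_all _ fun t => ?_) hmeas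
    rw [hnorm, Real.norm_eq_abs]
    gcongr
    exact Real.rpow_le_one_of_one_le_of_nonpos (by linarith [abs_nonneg t]) (by linarith)
  · have hdecay : Integrable fun t : ℝ => (1 + ‖t‖) ^ (-e) :=
      integrable_one_add_norm (by simpa using he)
    refine hdecay.integrableOn.mono' hmeas.restrict
      (ae_restrict_of_forall_mem measurableSet_ball.compl fun t ht => ?_)
    have ht1 : 1 ≤ |t| := by simpa using ht
    rw [hnorm, Real.norm_eq_abs]
    exact mul_le_of_le_one_right (by positivity)
      (Real.rpow_le_one_of_one_le_of_nonpos ht1 (by linarith))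

section Homogeneous

variable {E : Type*} [NormedAddCommGroup E] [NormedSpace ℝ E] [FiniteDimensional ℝ E]
  [MeasurableSpace E] [BorelSpace E] (μ : Measure E) [μ.IsAddHaarMeasure]

theorem lintegral_eq_mul_lintegral_comp_smul {f : E → ℝ≥0∞} (hf : Measurable f) {ρ : ℝ}
    (hρ : 0 < ρ) :
    ∫⁻ x, f x ∂μ = ENNReal.ofReal ρ ^ Module.finrank ℝ E * ∫⁻ x, f (ρ • x) ∂μ := by
  rw [← lintegral_map hf (measurable_const_smul ρ), Measure.map_addHaar_smul μ hρ.ne',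
    lintegral_smul_measure, smul_eq_mul, ← mul_assoc, ← ENNReal.ofReal_pow hρ.le,
    ← ENNReal.ofReal_mul (by positivity), abs_of_pos (by positivity),
    mul_inv_cancel₀ (by positivity), ENNReal.ofReal_one, one_mul]

theorem setLIntegral_norm_ge_of_homogeneous {k : E → ℝ≥0∞} (hk : Measurable k) {θ : ℝ}
    (hhom : ∀ ρ : ℝ, 0 < ρ → ∀ x,
      k (ρ • x) = ENNReal.ofReal ρ ^ (-(Module.finrank ℝ E + θ)) * k x) {ρ : ℝ} (hρ : 0 < ρ) :
    ∫⁻ x in {x | ρ ≤ ‖x‖}, k x ∂μ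
      = ENNReal.ofReal ρ ^ (-θ) * ∫⁻ x in {x | 1 ≤ ‖x‖}, k x ∂μ := by
  have hmeas (r : ℝ) : MeasurableSet {x : E | r ≤ ‖x‖} :=
    measurableSet_le measurable_const measurable_norm
  have hind (x : E) : {x : E | ρ ≤ ‖x‖}.indicator k (ρ • x)
      = ENNReal.ofReal ρ ^ (-(Module.finrank ℝ E + θ)) * {x : E | 1 ≤ ‖x‖}.indicator k x := by
    simp only [indicator, mem_ofPred_eq, norm_smul, Real.norm_of_nonneg hρ.le,
      le_mul_iff_one_le_right hρ, hhom ρ hρ x, mul_ite, mul_zero]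
  have hρ0 : ENNReal.ofReal ρ ≠ 0 := by simpa using hρ
  rw [← lintegral_indicator (hmeas ρ),
    lintegral_eq_mul_lintegral_comp_smul μ (hk.indicator (hmeas ρ)) hρ]
  simp_rw [hind]
  rw [lintegral_const_mul _ (hk.indicator (hmeas 1)), lintegral_indicator (hmeas 1), ← mul_assoc,
    ← ENNReal.rpow_natCast, ← ENNReal.rpow_add _ _ hρ0 ENNReal.ofReal_ne_top]
  congr 2
  ring

end Homogeneous

section AnisotropicKernel

variable {ι : Type*} [Fintype ι]

/-- The even kernel `|H|^{-β} ∏ᵢ |Hᵢ|^{-γᵢ}`, homogeneous of degree `-(β + ∑ᵢ γᵢ)`, which replaces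
the Gagliardo kernel after the change of variables. It takes the value `∞` where a coordinate
with `γᵢ > 0` vanishes, unlike the corresponding real-valued expression. -/
def anisotropicKernel (β : ℝ) (γ : ι → ℝ) (H : EuclideanSpace ℝ ι) : ℝ≥0∞ :=
  ‖H‖ₑ ^ (-β) * ∏ i, ‖H i‖ₑ ^ (-γ i)

@[fun_prop]
theorem measurable_anisotropicKernel (β : ℝ) (γ : ι → ℝ) : Measurable (anisotropicKernel β γ) := by
  have (i : ι) : Measurable fun H : EuclideanSpace ℝ ι => ‖H i‖ₑ := by fun_prop
  unfold anisotropicKernel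
  fun_prop

theorem anisotropicKernel_neg (β : ℝ) (γ : ι → ℝ) (H : EuclideanSpace ℝ ι) :
    anisotropicKernel β γ (-H) = anisotropicKernel β γ H := by
  simp [anisotropicKernel]

theorem anisotropicKernel_smul (β : ℝ) (γ : ι → ℝ) {ρ : ℝ} (hρ : 0 < ρ)
    (H : EuclideanSpace ℝ ι) :
    anisotropicKernel β γ (ρ • H)
      = ENNReal.ofReal ρ ^ (-(β + ∑ i, γ i)) * anisotropicKernel β γ H := by
  have hprod : ∏ i, ENNReal.ofReal ρ ^ (-γ i) = ENNReal.ofReal ρ ^ (-∑ i, γ i) := by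
    simp_rw [ENNReal.ofReal_rpow_of_pos hρ]
    rw [← ENNReal.ofReal_prod_of_nonneg fun i _ => by positivity, ← Real.rpow_sum_of_pos hρ,
      Finset.sum_neg_distrib]
  have hsmul (i : ι) : ‖(ρ • H) i‖ₑ = ENNReal.ofReal ρ * ‖H i‖ₑ := by
    rw [PiLp.smul_apply, enorm_smul, Real.enorm_eq_ofReal hρ.le]
  simp_rw [anisotropicKernel, hsmul, enorm_smul, Real.enorm_eq_ofReal hρ.le]
  rw [ENNReal.mul_rpow_of_ne_top ENNReal.ofReal_ne_top enorm_ne_top]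
  simp_rw [ENNReal.mul_rpow_of_ne_top ENNReal.ofReal_ne_top (enorm_ne_top (x := H _))]
  rw [Finset.prod_mul_distrib, hprod, neg_add,
    ENNReal.rpow_add _ _ (by simpa using hρ) ENNReal.ofReal_ne_top]
  ring

theorem enorm_pow_mul_anisotropicKernel (β : ℝ) (γ : ι → ℝ) (n : ℕ) {H : EuclideanSpace ℝ ι}
    (hH : H ≠ 0) : ‖H‖ₑ ^ n * anisotropicKernel (β + n) γ H = anisotropicKernel β γ H := by
  rw [anisotropicKernel, ← mul_assoc, ← ENNReal.rpow_natCast,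
    ← ENNReal.rpow_add _ _ (by simpa using hH) enorm_ne_top, anisotropicKernel]
  congr 2
  ring

theorem ae_forall_apply_ne_zero : ∀ᵐ H : EuclideanSpace ℝ ι, ∀ i, H i ≠ 0 := by
  have hae : ∀ᵐ x : ι → ℝ, ∀ i, x i ≠ 0 :=
    ae_all_iff.2 fun i => Measure.ae_eval_ne (μ := fun _ => volume) i 0
  exact (PiLp.volume_preserving_ofLp ι).quasiMeasurePreserving.ae hae

theorem integrable_prod_euclideanSpace {f : ι → ℝ → ℝ} (hf : ∀ i, Integrable (f i)) :
    Integrable fun H : EuclideanSpace ℝ ι => ∏ i, f i (H i) :=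
  (PiLp.volume_preserving_ofLp ι).integrable_comp_of_integrable
    (Integrable.fintype_prod hf)

theorem rpow_neg_card_le_prod_one_add_abs {e : ℝ} (he : 0 ≤ e)
    {H : EuclideanSpace ℝ ι} (hH : 1 ≤ ‖H‖) :
    ‖H‖ ^ (-(Fintype.card ι * e)) ≤ 2 ^ (Fintype.card ι * e) * ∏ i, (1 + |H i|) ^ (-e) := by
  have hcoord (i : ι) : ‖H‖ ^ (-e) ≤ 2 ^ e * (1 + |H i|) ^ (-e) := by
    have hi : (1 + |H i|) / 2 ≤ ‖H‖ := by linarith [PiLp.norm_apply_le H i, Real.norm_eq_abs (H i)]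
    calc ‖H‖ ^ (-e) ≤ ((1 + |H i|) / 2) ^ (-e) :=
          Real.rpow_le_rpow_of_nonpos (by positivity) hi (by linarith)
      _ = 2 ^ e * (1 + |H i|) ^ (-e) := by
          rw [Real.div_rpow (by positivity) (by norm_num), Real.rpow_neg zero_le_two]
          field_simp
  calc ‖H‖ ^ (-(Fintype.card ι * e)) = ∏ _i : ι, ‖H‖ ^ (-e) := by
        rw [Finset.prod_const, Finset.card_univ, ← Real.rpow_mul_natCast (norm_nonneg _)]
        ring_nf
    _ ≤ ∏ i, 2 ^ e * (1 + |H i|) ^ (-e) :=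
        Finset.prod_le_prod (fun i _ => by positivity) fun i _ => hcoord i
    _ = 2 ^ (Fintype.card ι * e) * ∏ i, (1 + |H i|) ^ (-e) := by
        rw [Finset.prod_mul_distrib, Finset.prod_const, Finset.card_univ,
          ← Real.rpow_mul_natCast zero_le_two, mul_comm e]

theorem setLIntegral_anisotropicKernel_lt_top [Nonempty ι] {β : ℝ} (hβ : Fintype.card ι < β)
    {γ : ι → ℝ} (hγ0 : ∀ i, 0 ≤ γ i) (hγ1 : ∀ i, γ i < 1) :
    ∫⁻ H in {H | 1 ≤ ‖H‖}, anisotropicKernel β γ H < ∞ := by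
  set e : ℝ := β / Fintype.card ι
  have hcard : (0 : ℝ) < Fintype.card ι := by exact_mod_cast Fintype.card_pos
  have he : 1 < e := (one_lt_div hcard).2 hβ
  have hβe : Fintype.card ι * e = β := mul_div_cancel₀ _ hcard.ne'
  set F : EuclideanSpace ℝ ι → ℝ :=
    fun H => 2 ^ β * ∏ i, ((1 + |H i|) ^ (-e) * |H i| ^ (-γ i))
  have hint : Integrable F := (integrable_prod_euclideanSpace fun i =>
    integrable_one_add_abs_rpow_mul_abs_rpow he (hγ0 i) (hγ1 i)).const_mul _
  have hbound : ∀ᵐ H : EuclideanSpace ℝ ι, H ∈ {H : EuclideanSpace ℝ ι | 1 ≤ ‖H‖} →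
      anisotropicKernel β γ H ≤ ENNReal.ofReal (F H) := by
    filter_upwards [ae_forall_apply_ne_zero (ι := ι)] with H hne hH
    have hH0 : 0 < ‖H‖ := zero_lt_one.trans_le hH
    have hcoord (i : ι) : ‖H i‖ₑ ^ (-γ i) = ENNReal.ofReal (|H i| ^ (-γ i)) := by
      rw [← ENNReal.ofReal_rpow_of_pos (abs_pos.2 (hne i)), ← Real.norm_eq_abs, ofReal_norm]
    rw [anisotropicKernel, Finset.prod_congr rfl fun i _ => hcoord i,
      ← ENNReal.ofReal_prod_of_nonneg fun i _ => by positivity, ← ofReal_norm,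
      ENNReal.ofReal_rpow_of_pos hH0, ← ENNReal.ofReal_mul (by positivity)]
    refine ENNReal.ofReal_le_ofReal ?_
    simp only [F, Finset.prod_mul_distrib, ← mul_assoc]
    gcongr
    simpa only [hβe] using rpow_neg_card_le_prod_one_add_abs (zero_le_one.trans he.le) hH
  exact (setLIntegral_mono_ae' (measurableSet_le measurable_const measurable_norm) hbound).trans_lt
    ((setLIntegral_le_lintegral _ _).trans_lt hint.lintegral_lt_top)

theorem exists_setLIntegral_anisotropicKernel_le [Nonempty ι] {β : ℝ} (hβ : 0 < β) {γ : ι → ℝ}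
    (hγ0 : ∀ i, 0 ≤ γ i) (hγ1 : ∀ i, γ i < 1) :
    ∃ K : ℝ≥0, ∀ ρ : ℝ, 0 < ρ →
      ∫⁻ H in {H | ρ ≤ ‖H‖}, anisotropicKernel (β + Fintype.card ι) γ H
        ≤ K * ENNReal.ofReal ρ ^ (-(β + ∑ i, γ i)) := by
  have hfin := setLIntegral_anisotropicKernel_lt_top (lt_add_of_pos_left _ hβ) hγ0 hγ1
  lift ∫⁻ H in {H | 1 ≤ ‖H‖}, anisotropicKernel (β + Fintype.card ι) γ H to ℝ≥0 using hfin.ne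
    with K hK
  refine ⟨K, fun ρ hρ => ?_⟩
  rw [setLIntegral_norm_ge_of_homogeneous volume (θ := β + ∑ i, γ i) (by fun_prop)
    (fun ρ hρ H => ?_) hρ, hK, mul_comm]
  rw [anisotropicKernel_smul _ _ hρ, finrank_euclideanSpace]
  ring_nf

end AnisotropicKernel

section MutualEnergy

variable {α : Type*} [MeasurableSpace α]

/-- The mutual energy `∫_A ∫_B e(x, y) dy dx` of two sets for an interaction density `e`. -/
def mutualEnergy (μ : Measure α) (e : α → α → ℝ≥0∞) (A B : Set α) : ℝ≥0∞ :=
  ∫⁻ x in A, ∫⁻ y in B, e x y ∂μ ∂μ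

variable {μ : Measure α} {e : α → α → ℝ≥0∞} {A A' B B' : Set α}

theorem mutualEnergy_mono_set (hA : A ⊆ A') (hB : B ⊆ B') :
    mutualEnergy μ e A B ≤ mutualEnergy μ e A' B' :=
  (lintegral_mono_set hA).trans (lintegral_mono fun _ => lintegral_mono_set hB)

theorem mutualEnergy_le_const_mul {e' : α → α → ℝ≥0∞} (c : ℝ≥0) (hA : MeasurableSet A)
    (hB : MeasurableSet B) (h : ∀ x ∈ A, ∀ y ∈ B, e x y ≤ c * e' x y) :
    mutualEnergy μ e A B ≤ c * mutualEnergy μ e' A B := by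
  calc mutualEnergy μ e A B ≤ mutualEnergy μ (fun x y => c * e' x y) A B :=
        setLIntegral_mono' hA fun x hx => setLIntegral_mono' hB fun y hy => h x hx y hy
    _ = c * mutualEnergy μ e' A B := by
        simp only [mutualEnergy, lintegral_const_mul' _ _ ENNReal.coe_ne_top]

theorem mutualEnergy_add (he : Measurable (Function.uncurry e)) (e' : α → α → ℝ≥0∞)
    [SFinite μ] :
    mutualEnergy μ (fun x y => e x y + e' x y) A B
      = mutualEnergy μ e A B + mutualEnergy μ e' A B := by
  simp only [mutualEnergy]
  rw [← lintegral_add_left he.lintegral_prod_right]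
  exact lintegral_congr fun x => lintegral_add_left he.of_uncurry_left _

theorem mutualEnergy_swap [SFinite μ] (he : Measurable (Function.uncurry e)) (A B : Set α) :
    mutualEnergy μ (fun x y => e y x) A B = mutualEnergy μ e B A :=
  lintegral_lintegral_swap (he.comp measurable_swap).aemeasurable

theorem mutualEnergy_union_self_le [SFinite μ] (he : Measurable (Function.uncurry e))
    (hsymm : ∀ x y, e x y = e y x) :
    mutualEnergy μ e (A ∪ B) (A ∪ B)
      ≤ mutualEnergy μ e A A + 2 * mutualEnergy μ e A B + mutualEnergy μ e B B := by
  have hsplit (D : Set α) :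
      mutualEnergy μ e D (A ∪ B) ≤ mutualEnergy μ e D A + mutualEnergy μ e D B := by
    simp only [mutualEnergy]
    rw [← lintegral_add_left he.lintegral_prod_right]
    exact lintegral_mono fun x => lintegral_union_le _ _ _
  have hcomm : mutualEnergy μ e B A = mutualEnergy μ e A B := by
    rw [← mutualEnergy_swap he A B]
    simp only [hsymm]
  calc mutualEnergy μ e (A ∪ B) (A ∪ B)
      ≤ mutualEnergy μ e A (A ∪ B) + mutualEnergy μ e B (A ∪ B) := lintegral_union_le _ _ _
    _ ≤ (mutualEnergy μ e A A + mutualEnergy μ e A B)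
          + (mutualEnergy μ e B A + mutualEnergy μ e B B) := add_le_add (hsplit A) (hsplit B)
    _ = mutualEnergy μ e A A + 2 * mutualEnergy μ e A B + mutualEnergy μ e B B := by
        rw [hcomm]
        ring

end MutualEnergy

section Averaging

variable {E F : Type*} [NormedAddCommGroup E] [NormedAddCommGroup F]

/-- The interaction density `|u(x) - u(y)|^p k(x - y)`; with the Riesz kernel `k = |·|^{-(m+σp)}`
its mutual energy is the `p`-th power of the Gagliardo seminorm. -/
def diffDensity (p : ℝ) (k : E → ℝ≥0∞) (u : E → F) (x y : E) : ℝ≥0∞ :=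
  ‖u x - u y‖ₑ ^ p * k (x - y)

/-- The kernel `|H|^{-θ}`. -/
def rieszKernel (θ : ℝ) (H : E) : ℝ≥0∞ := ‖H‖ₑ ^ (-θ)

theorem diffDensity_comm {p : ℝ} {k : E → ℝ≥0∞} (hk : ∀ H, k (-H) = k H) (u : E → F) (x y : E) :
    diffDensity p k u x y = diffDensity p k u y x := by
  rw [diffDensity, diffDensity, enorm_sub_rev, ← neg_sub x y, hk]

theorem diffDensity_congr {p : ℝ} (hp : 0 < p) {k k' : E → ℝ≥0∞} (h : ∀ H, H ≠ 0 → k H = k' H)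
    (u : E → F) : diffDensity p k u = diffDensity p k' u := by
  ext x y
  rcases eq_or_ne x y with rfl | hxy
  · simp [diffDensity, hp]
  · rw [diffDensity, diffDensity, h _ (sub_ne_zero.2 hxy)]

/-- Integrating this function over the midway points `z` controls `|u(x) - u(y)|^p k(x - y)` from
one side; integrating it over `y` produces a Riesz kernel in `x - z`. -/
def midwayDensity (p : ℝ) (k : E → ℝ≥0∞) (u : E → F) (x y z : E) : ℝ≥0∞ :=
  {H | ‖x - z‖ / 2 ≤ ‖H‖}.indicator k (x - y) * ‖u x - u z‖ₑ ^ p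

theorem diffDensity_le_midwayDensity_add {p : ℝ} (hp : 1 ≤ p) {k : E → ℝ≥0∞}
    (hk_even : ∀ H, k (-H) = k H) (u : E → F) {x y z : E} (hz : z ∈ ball x (‖x - y‖ / 2)) :
    diffDensity p k u x y
      ≤ 2 ^ (p - 1) * (midwayDensity p k u x y z + midwayDensity p k u y x z) := by
  have hxz : ‖x - z‖ < ‖x - y‖ / 2 := by rwa [← mem_ball_iff_norm']
  have hyz : ‖y - z‖ ≤ ‖x - y‖ + ‖x - z‖ := by
    simpa [norm_sub_rev] using norm_sub_le_norm_sub_add_norm_sub y x z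
  have hx : x - y ∈ {H : E | ‖x - z‖ / 2 ≤ ‖H‖} := by
    simp only [mem_ofPred_eq]; linarith [norm_nonneg (x - y)]
  have hy : y - x ∈ {H : E | ‖y - z‖ / 2 ≤ ‖H‖} := by
    simp only [mem_ofPred_eq, norm_sub_rev y x]; linarith [norm_nonneg (x - y)]
  have htri : ‖u x - u y‖ₑ ≤ ‖u x - u z‖ₑ + ‖u y - u z‖ₑ := by
    simpa using enorm_sub_le (a := u x - u z) (b := u y - u z)
  calc diffDensity p k u x y
      ≤ (2 ^ (p - 1) * (‖u x - u z‖ₑ ^ p + ‖u y - u z‖ₑ ^ p)) * k (x - y) := by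
        rw [diffDensity]
        gcongr
        exact (ENNReal.rpow_le_rpow htri (by linarith)).trans
          (ENNReal.rpow_add_le_mul_rpow_add_rpow _ _ hp)
    _ = 2 ^ (p - 1) * (midwayDensity p k u x y z + midwayDensity p k u y x z) := by
        rw [midwayDensity, midwayDensity, indicator_of_mem hx, indicator_of_mem hy,
          ← neg_sub x y, hk_even]
        ring

variable [MeasurableSpace E]

/-- `A` is thick in dimension `n` at its points, at the scale of their distances to `G`. -/
def IsThickAlong (μ : Measure E) (n : ℕ) (M : ℝ≥0∞) (A G : Set E) : Prop :=
  ∀ x ∈ A, ∀ y ∈ G, x ≠ y → ‖x - y‖ₑ ^ n ≤ M * μ (ball x (‖x - y‖ / 2) ∩ A)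

variable [BorelSpace E] {p θ : ℝ} {k : E → ℝ≥0∞} {μ : Measure E} {K : ℝ≥0∞}

theorem lintegral_midwayDensity_le [μ.IsAddLeftInvariant] [μ.IsNegInvariant]
    (hp : 0 < p) (hθ : 0 ≤ θ) (hk : Measurable k)
    (htail : ∀ ρ : ℝ, 0 < ρ → ∫⁻ H in {H | ρ ≤ ‖H‖}, k H ∂μ ≤ K * ENNReal.ofReal ρ ^ (-θ))
    (u : E → F) (x z : E) :
    ∫⁻ y, midwayDensity p k u x y z ∂μ ≤ K * 2 ^ θ * diffDensity p (rieszKernel θ) u x z := by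
  rcases eq_or_ne x z with rfl | hxz
  · simp [midwayDensity, hp]
  have hpos : 0 < ‖x - z‖ := norm_pos_iff.2 (sub_ne_zero.2 hxz)
  have hfar : MeasurableSet {H : E | ‖x - z‖ / 2 ≤ ‖H‖} :=
    measurableSet_le measurable_const measurable_norm
  have hhalf : ENNReal.ofReal (‖x - z‖ / 2) ^ (-θ) = 2 ^ θ * ‖x - z‖ₑ ^ (-θ) := by
    rw [ENNReal.ofReal_div_of_pos two_pos, ofReal_norm, ENNReal.ofReal_ofNat, ENNReal.rpow_neg,
      ENNReal.div_rpow_of_nonneg _ _ hθ, ENNReal.inv_div (by simp) (by simp),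
      ENNReal.rpow_neg, ENNReal.div_eq_inv_mul, mul_comm]
  have hmeas : Measurable fun y => {H : E | ‖x - z‖ / 2 ≤ ‖H‖}.indicator k (x - y) :=
    (hk.indicator hfar).comp (measurable_id.const_sub x)
  calc ∫⁻ y, midwayDensity p k u x y z ∂μ
      = (∫⁻ H in {H | ‖x - z‖ / 2 ≤ ‖H‖}, k H ∂μ) * ‖u x - u z‖ₑ ^ p := by
        simp only [midwayDensity]
        rw [lintegral_mul_const _ hmeas,
          lintegral_sub_left_eq_self ({H : E | ‖x - z‖ / 2 ≤ ‖H‖}.indicator k) x,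
          lintegral_indicator hfar]
    _ ≤ K * (2 ^ θ * ‖x - z‖ₑ ^ (-θ)) * ‖u x - u z‖ₑ ^ p := by
        rw [← hhalf]
        gcongr
        exact htail _ (by positivity)
    _ = K * 2 ^ θ * diffDensity p (rieszKernel θ) u x z := by
        rw [diffDensity, rieszKernel]
        ring

variable [SecondCountableTopology E]

theorem measurable_diffDensity (hk : Measurable k) (p : ℝ) {u : E → F}
    (hu : StronglyMeasurable u) : Measurable (Function.uncurry (diffDensity p k u)) :=
  (((hu.comp_measurable measurable_fst).sub (hu.comp_measurable measurable_snd)).enorm.pow_const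
    p).mul (hk.comp (measurable_fst.sub measurable_snd))

variable {u : E → F} {n : ℕ} {M : ℝ≥0∞} {A G : Set E}

theorem measurable_midwayDensity {Ω : Type*} [MeasurableSpace Ω] {x y z : Ω → E}
    (hk : Measurable k) (hu : StronglyMeasurable u) (hx : Measurable x) (hy : Measurable y)
    (hz : Measurable z) : Measurable fun a => midwayDensity p k u (x a) (y a) (z a) := by
  have hdiff : Measurable fun a => ‖u (x a) - u (z a)‖ₑ ^ p :=
    ((hu.comp_measurable hx).sub (hu.comp_measurable hz)).enorm.pow_const p
  have hind : Measurable fun a => {H : E | ‖x a - z a‖ / 2 ≤ ‖H‖}.indicator k (x a - y a) := by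
    simp only [indicator_apply, mem_ofPred_eq]
    exact Measurable.ite (measurableSet_le ((hx.sub hz).norm.div_const 2) (hx.sub hy).norm)
      (hk.comp (hx.sub hy)) measurable_const
  exact hind.mul hdiff

theorem IsThickAlong.diffDensity_le (hA : IsThickAlong μ n M A G) (hAm : MeasurableSet A)
    (hp : 1 ≤ p) (hk : Measurable k) (hk_even : ∀ H, k (-H) = k H) (hu : StronglyMeasurable u)
    {x y : E} (hx : x ∈ A) (hy : y ∈ G) :
    diffDensity p (fun H => ‖H‖ₑ ^ n * k H) u x y ≤ 2 ^ (p - 1) * M *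
      ((∫⁻ z in A, midwayDensity p k u x y z ∂μ) + ∫⁻ z in A, midwayDensity p k u y x z ∂μ) := by
  rcases eq_or_ne x y with rfl | hxy
  · simp [diffDensity, zero_lt_one.trans_le hp]
  have hmeas : Measurable fun z => midwayDensity p k u x y z :=
    measurable_midwayDensity hk hu measurable_const measurable_const measurable_id
  calc diffDensity p (fun H => ‖H‖ₑ ^ n * k H) u x y
      = ‖x - y‖ₑ ^ n * diffDensity p k u x y := by
        rw [diffDensity, diffDensity]
        ring
    _ ≤ M * μ (ball x (‖x - y‖ / 2) ∩ A) * diffDensity p k u x y := by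
        gcongr
        exact hA x hx y hy hxy
    _ = M * ∫⁻ _ in ball x (‖x - y‖ / 2) ∩ A, diffDensity p k u x y ∂μ := by
        rw [setLIntegral_const]
        ring
    _ ≤ M * ∫⁻ z in ball x (‖x - y‖ / 2) ∩ A,
          2 ^ (p - 1) * (midwayDensity p k u x y z + midwayDensity p k u y x z) ∂μ := by
        gcongr M * ?_
        exact setLIntegral_mono' (measurableSet_ball.inter hAm) fun z hz =>
          diffDensity_le_midwayDensity_add hp hk_even u hz.1
    _ ≤ M * ∫⁻ z in A,
          2 ^ (p - 1) * (midwayDensity p k u x y z + midwayDensity p k u y x z) ∂μ := by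
        gcongr M * ?_
        exact lintegral_mono_set inter_subset_right
    _ = _ := by
        rw [lintegral_const_mul' _ _ (by simp), lintegral_add_left hmeas]
        ring

variable [SFinite μ]

theorem mutualEnergy_midwayDensity_le [μ.IsAddLeftInvariant] [μ.IsNegInvariant]
    (hp : 0 < p) (hθ : 0 ≤ θ) (hk : Measurable k)
    (htail : ∀ ρ : ℝ, 0 < ρ → ∫⁻ H in {H | ρ ≤ ‖H‖}, k H ∂μ ≤ K * ENNReal.ofReal ρ ^ (-θ))
    (hK : K ≠ ∞) (hu : StronglyMeasurable u) (A B G : Set E) :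
    mutualEnergy μ (fun x y => ∫⁻ z in B, midwayDensity p k u x y z ∂μ) A G
      ≤ K * 2 ^ θ * mutualEnergy μ (diffDensity p (rieszKernel θ) u) A B := by
  have hC : K * 2 ^ θ ≠ ∞ := ENNReal.mul_ne_top hK (by simp)
  simp only [mutualEnergy]
  rw [← lintegral_const_mul' _ _ hC]
  refine lintegral_mono fun x => ?_
  have hmeas : Measurable (Function.uncurry fun y z => midwayDensity p k u x y z) :=
    measurable_midwayDensity hk hu measurable_const measurable_fst measurable_snd
  rw [lintegral_lintegral_swap hmeas.aemeasurable, ← lintegral_const_mul' _ _ hC]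
  exact lintegral_mono fun z => (setLIntegral_le_lintegral _ _).trans
    (lintegral_midwayDensity_le hp hθ hk htail u x z)

theorem IsThickAlong.mutualEnergy_le [μ.IsAddLeftInvariant] [μ.IsNegInvariant]
    (hA : IsThickAlong μ n M A G) (hAm : MeasurableSet A) (hGm : MeasurableSet G) (hM : M ≠ ∞)
    (hp : 1 ≤ p) (hθ : 0 ≤ θ) (hk : Measurable k) (hk_even : ∀ H, k (-H) = k H)
    (htail : ∀ ρ : ℝ, 0 < ρ → ∫⁻ H in {H | ρ ≤ ‖H‖}, k H ∂μ ≤ K * ENNReal.ofReal ρ ^ (-θ))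
    (hK : K ≠ ∞) (hu : StronglyMeasurable u) :
    mutualEnergy μ (diffDensity p (fun H => ‖H‖ₑ ^ n * k H) u) A G
      ≤ 2 ^ (p - 1) * (K * 2 ^ θ) * M * (mutualEnergy μ (diffDensity p (rieszKernel θ) u) A A
        + mutualEnergy μ (diffDensity p (rieszKernel θ) u) G A) := by
  have hp0 : 0 < p := zero_lt_one.trans_le hp
  have hC : 2 ^ (p - 1) * M ≠ ∞ := ENNReal.mul_ne_top (by simp) hM
  lift 2 ^ (p - 1) * M to ℝ≥0 using hC with C hCdef
  set T : E → E → ℝ≥0∞ := fun x y => ∫⁻ z in A, midwayDensity p k u x y z ∂μ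
  have hT : Measurable (Function.uncurry T) :=
    Measurable.lintegral_prod_right'
      (f := fun q : (E × E) × E => midwayDensity p k u q.1.1 q.1.2 q.2)
      (measurable_midwayDensity hk hu (by fun_prop) (by fun_prop) measurable_snd)
  calc mutualEnergy μ (diffDensity p (fun H => ‖H‖ₑ ^ n * k H) u) A G
      ≤ C * mutualEnergy μ (fun x y => T x y + T y x) A G :=
        mutualEnergy_le_const_mul C hAm hGm fun x hx y hy => by
          rw [hCdef]
          exact hA.diffDensity_le hAm hp hk hk_even hu hx hy
    _ = C * (mutualEnergy μ T A G + mutualEnergy μ T G A) := by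
        rw [mutualEnergy_add hT, mutualEnergy_swap hT]
    _ ≤ C * (K * 2 ^ θ * mutualEnergy μ (diffDensity p (rieszKernel θ) u) A A
          + K * 2 ^ θ * mutualEnergy μ (diffDensity p (rieszKernel θ) u) G A) := by
        gcongr <;> exact mutualEnergy_midwayDensity_le hp0 hθ hk htail hK hu _ _ _
    _ = _ := by
        rw [hCdef]
        ring

end Averaging

section Thickness

variable {E : Type*} [NormedAddCommGroup E]

section

variable [MeasurableSpace E] {μ : Measure E}

theorem IsThickAlong.mono_right {n : ℕ} {M : ℝ≥0∞} {A G G' : Set E} (h : IsThickAlong μ n M A G)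
    (hG : G' ⊆ G) : IsThickAlong μ n M A G' :=
  fun x hx y hy => h x hx y (hG hy)

theorem isThickAlong_of_ball_measure_ge {n : ℕ} {c : ℝ} (hc : 0 < c) {A ω : Set E} (hA : A ⊆ ω)
    (h : ∀ x ∈ A, ∀ t : ℝ, 0 < t → 2 * ENNReal.ofReal t ≤ ediam ω →
      ENNReal.ofReal (c * t ^ n) ≤ μ (ball x t ∩ A)) :
    IsThickAlong μ n (ENNReal.ofReal (2 ^ n / c)) A ω := by
  intro x hx y hy hxy
  have hpos : 0 < ‖x - y‖ := norm_pos_iff.2 (sub_ne_zero.2 hxy)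
  have hdiam : 2 * ENNReal.ofReal (‖x - y‖ / 2) ≤ ediam ω := by
    rw [← ENNReal.ofReal_ofNat, ← ENNReal.ofReal_mul zero_le_two, mul_div_cancel₀ _ two_ne_zero,
      ofReal_norm, ← edist_eq_enorm_sub]
    exact edist_le_ediam_of_mem (hA hx) hy
  calc ‖x - y‖ₑ ^ n = ENNReal.ofReal (2 ^ n / c) * ENNReal.ofReal (c * (‖x - y‖ / 2) ^ n) := by
        rw [← ENNReal.ofReal_mul (by positivity), ← ofReal_norm, ← ENNReal.ofReal_pow hpos.le,
          div_pow]
        congr 1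
        field_simp
    _ ≤ _ := by
        gcongr
        exact h x hx _ (half_pos hpos) hdiam

end

variable [NormedSpace ℝ E] {Q : Set E}

theorem homothety_image_subset_ball_inter (hQ : Convex ℝ Q) {x : E} (hx : x ∈ Q) {R t : ℝ}
    (ht : 0 < t) (htR : t ≤ R) (hdist : ∀ z ∈ Q, dist x z < R) :
    AffineMap.homothety x (t / R) '' Q ⊆ ball x t ∩ Q := by
  have hR : 0 < R := ht.trans_le htR
  rintro _ ⟨z, hz, rfl⟩
  constructor
  · rw [mem_ball, dist_homothety_center, Real.norm_of_nonneg (by positivity)]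
    calc t / R * dist x z < t / R * R := by gcongr; exact hdist z hz
      _ = t := div_mul_cancel₀ _ hR.ne'
  · rw [AffineMap.homothety_eq_lineMap]
    exact hQ.lineMap_mem hx hz ⟨by positivity, (div_le_one hR).2 htR⟩

theorem exists_isThickAlong_self_of_convex [FiniteDimensional ℝ E] [MeasurableSpace E]
    [BorelSpace E] {μ : Measure E} [μ.IsAddHaarMeasure] (hQ : Convex ℝ Q)
    (hb : Bornology.IsBounded Q) (hpos : μ Q ≠ 0) :
    ∃ M : ℝ≥0, IsThickAlong μ (Module.finrank ℝ E) M Q Q := by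
  have hfin : μ Q ≠ ∞ := hb.measure_lt_top.ne
  set n := Module.finrank ℝ E
  set R : ℝ := diam Q + 1
  have hR : 0 < R := by positivity
  have hdist {x : E} (hx : x ∈ Q) : ∀ z ∈ Q, dist x z < R := fun z hz =>
    (dist_le_diam_of_mem hb hx hz).trans_lt (lt_add_one _)
  have hM : ENNReal.ofReal ((2 * R) ^ n) * (μ Q)⁻¹ ≠ ∞ :=
    ENNReal.mul_ne_top ENNReal.ofReal_ne_top (ENNReal.inv_ne_top.2 hpos)
  lift ENNReal.ofReal ((2 * R) ^ n) * (μ Q)⁻¹ to ℝ≥0 using hM with M hMdef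
  refine ⟨M, fun x hx y hy hxy => ?_⟩
  have hxy0 : 0 < ‖x - y‖ := norm_pos_iff.2 (sub_ne_zero.2 hxy)
  have htR : ‖x - y‖ / 2 ≤ R := by
    rw [← dist_eq_norm] at hxy0 ⊢
    exact (half_le_self hxy0.le).trans (hdist hx y hy).le
  calc ‖x - y‖ₑ ^ n
      = ENNReal.ofReal ((2 * R) ^ n) * ENNReal.ofReal ((‖x - y‖ / 2 / R) ^ n)
          * ((μ Q)⁻¹ * μ Q) := by
        rw [ENNReal.inv_mul_cancel hpos hfin, mul_one, ← ENNReal.ofReal_mul (by positivity),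
          ← ofReal_norm, ← ENNReal.ofReal_pow hxy0.le, ← mul_pow]
        congr 2
        field_simp
    _ = M * μ (AffineMap.homothety x (‖x - y‖ / 2 / R) '' Q) := by
        rw [Measure.addHaar_image_homothety, abs_of_pos (by positivity), hMdef]
        ring
    _ ≤ M * μ (ball x (‖x - y‖ / 2) ∩ Q) := by
        gcongr
        exact homothety_image_subset_ball_inter hQ hx (half_pos hxy0) htR (hdist hx)

end Thickness

section Gagliardo

theorem gagliardoPow_eq_mutualEnergy {F : Type*} [NormedAddCommGroup F] (m : ℕ) (σ p : ℝ)
    (A : Set (Eucl m)) (u : Eucl m → F) :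
    gagliardoPow m σ p A u
      = mutualEnergy volume (diffDensity p (rieszKernel (m + σ * p)) u) A A := by
  simp only [gagliardoPow, mutualEnergy, diffDensity, rieszKernel, ENNReal.rpow_neg,
    div_eq_mul_inv, enorm_eq_nnnorm]

theorem exists_mutualEnergy_anisotropicKernel_le {ι : Type*} [Fintype ι] [Nonempty ι]
    {F : Type*} [NormedAddCommGroup F] {p β : ℝ} (hp : 1 ≤ p) (hβ : 0 < β) {γ : ι → ℝ}
    (hγ0 : ∀ i, 0 ≤ γ i) (hγ1 : ∀ i, γ i < 1) :
    ∃ C : ℝ≥0, ∀ (M : ℝ≥0) (A G : Set (EuclideanSpace ℝ ι)),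
      IsThickAlong volume (Fintype.card ι) M A G → MeasurableSet A → MeasurableSet G →
      ∀ u : EuclideanSpace ℝ ι → F, StronglyMeasurable u →
        mutualEnergy volume (diffDensity p (anisotropicKernel β γ) u) A G
          ≤ C * M * (mutualEnergy volume (diffDensity p (rieszKernel (β + ∑ i, γ i)) u) A A
            + mutualEnergy volume (diffDensity p (rieszKernel (β + ∑ i, γ i)) u) G A) := by
  obtain ⟨K, hK⟩ := exists_setLIntegral_anisotropicKernel_le hβ hγ0 hγ1
  have hθ : 0 ≤ β + ∑ i, γ i := add_nonneg hβ.le (Finset.sum_nonneg fun i _ => hγ0 i)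
  refine ⟨2 ^ (p - 1) * (K * 2 ^ (β + ∑ i, γ i)), fun M A G hA hAm hGm u hu => ?_⟩
  have h := hA.mutualEnergy_le hAm hGm ENNReal.coe_ne_top hp hθ
    (measurable_anisotropicKernel _ γ) (anisotropicKernel_neg _ γ) hK ENNReal.coe_ne_top hu
  rw [diffDensity_congr (zero_lt_one.trans_le hp)
    fun H hH => enorm_pow_mul_anisotropicKernel β γ (Fintype.card ι) hH] at h
  simpa [ENNReal.coe_rpow_of_ne_zero] using h

end Gagliardo

section AxialScaling

variable {m : ℕ} {d : ℕ}

/-- The projection `(x', x'') ↦ (x', 0)` onto the first `d` coordinates. -/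
def headProj (m d : ℕ) : Eucl m →L[ℝ] Eucl m :=
  Matrix.toEuclideanCLM (𝕜 := ℝ) (Matrix.diagonal fun i : Fin m => if (i : ℕ) < d then 1 else 0)

@[simp]
theorem headProj_apply (X : Eucl m) (i : Fin m) :
    headProj m d X i = if (i : ℕ) < d then X i else 0 := by
  simp [headProj, Matrix.mulVec_diagonal]

theorem headProj_headProj (X : Eucl m) : headProj m d (headProj m d X) = headProj m d X := by
  ext i
  simp only [headProj_apply]
  split_ifs <;> rfl

theorem norm_le_norm_of_forall_norm_apply_le {ι : Type*} [Fintype ι] {X Y : EuclideanSpace ℝ ι}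
    (h : ∀ i, ‖X i‖ ≤ ‖Y i‖) : ‖X‖ ≤ ‖Y‖ := by
  rw [EuclideanSpace.norm_eq, EuclideanSpace.norm_eq]
  gcongr with i
  exact h i

theorem norm_headProj_le (X : Eucl m) : ‖headProj m d X‖ ≤ ‖X‖ :=
  norm_le_norm_of_forall_norm_apply_le fun i => by
    rw [headProj_apply]
    split_ifs <;> simp

theorem norm_sub_headProj_le (X : Eucl m) : ‖X - headProj m d X‖ ≤ ‖X‖ :=
  norm_le_norm_of_forall_norm_apply_le fun i => by
    rw [PiLp.sub_apply, headProj_apply]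
    split_ifs <;> simp

theorem headNorm_eq_norm_headProj (X : Eucl m) : headNorm m d X = ‖headProj m d X‖ := by
  rw [headNorm, EuclideanSpace.norm_eq]
  congr 1
  refine Finset.sum_congr rfl fun i _ => ?_
  rw [headProj_apply]
  split_ifs <;> simp

theorem det_id_add_smul_headProj (hdm : d ≤ m) (k : ℝ) :
    (ContinuousLinearMap.id ℝ (Eucl m) + (k - 1) • headProj m d).det = k ^ d := by
  have hdiag : ContinuousLinearMap.id ℝ (Eucl m) + (k - 1) • headProj m d =
      Matrix.toEuclideanCLM (𝕜 := ℝ)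
        (Matrix.diagonal fun i : Fin m => if (i : ℕ) < d then k else 1) := by
    ext X i
    by_cases hi : (i : ℕ) < d
    · simpa [Matrix.mulVec_diagonal, hi] using by ring
    · simp [Matrix.mulVec_diagonal, hi]
  rw [hdiag, ContinuousLinearMap.det, Matrix.coe_toEuclideanCLM_eq_toEuclideanLin,
    Matrix.toEuclideanLin, Matrix.toLpLin_eq_toLin, LinearMap.det_toLin, Matrix.det_diagonal,
    Finset.prod_ite]
  simp [Fin.card_filter_val_lt, hdm]

/-- The map `(x', x'') ↦ (κ(x) x', x'')`. -/
def axialScaling (d : ℕ) (κ : Eucl m → ℝ) (X : Eucl m) : Eucl m :=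
  X + (κ X - 1) • headProj m d X

variable {κ : Eucl m → ℝ} {κ' : Eucl m →L[ℝ] ℝ} {X : Eucl m}

theorem headProj_axialScaling (κ : Eucl m → ℝ) (X : Eucl m) :
    headProj m d (axialScaling d κ X) = κ X • headProj m d X := by
  rw [axialScaling, map_add, map_smul, headProj_headProj]
  module

theorem axialScaling_sub_headProj (κ : Eucl m → ℝ) (X : Eucl m) :
    axialScaling d κ X - headProj m d (axialScaling d κ X) = X - headProj m d X := by
  rw [headProj_axialScaling, axialScaling]
  module

theorem axialScaling_apply_of_lt (κ : Eucl m → ℝ) (X : Eucl m) {i : Fin m} (hi : (i : ℕ) < d) :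
    axialScaling d κ X i = κ X * X i := by
  simp only [axialScaling, PiLp.add_apply, PiLp.smul_apply, headProj_apply, if_pos hi, smul_eq_mul]
  ring

theorem axialScaling_apply_of_le (κ : Eucl m → ℝ) (X : Eucl m) {i : Fin m} (hi : d ≤ (i : ℕ)) :
    axialScaling d κ X i = X i := by
  simp [axialScaling, hi.not_gt]

theorem contDiff_axialScaling {n : ℕ∞} (hκ : ContDiff ℝ n κ) :
    ContDiff ℝ n (axialScaling d κ) :=
  contDiff_id.add ((hκ.sub contDiff_const).smul (headProj m d).contDiff)

/-- The differential of `axialScaling d κ` at a point where `κ` has differential `κ'`. -/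
def axialScalingDeriv (d : ℕ) (κ : Eucl m → ℝ) (κ' : Eucl m →L[ℝ] ℝ) (X : Eucl m) :
    Eucl m →L[ℝ] Eucl m :=
  .id ℝ _ + ((κ X - 1) • headProj m d + κ'.smulRight (headProj m d X))

theorem hasFDerivAt_axialScaling (hκ : HasFDerivAt κ κ' X) :
    HasFDerivAt (axialScaling d κ) (axialScalingDeriv d κ κ' X) X :=
  (hasFDerivAt_id X).add ((hκ.sub_const 1).smul (headProj m d).hasFDerivAt)

theorem det_axialScalingDeriv (hdm : d ≤ m) (hκ : κ X ≠ 0) :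
    (axialScalingDeriv d κ κ' X).det
      = κ X ^ d * (1 + (κ X)⁻¹ * κ' (headProj m d X)) := by
  have hfactor : (axialScalingDeriv d κ κ' X : Eucl m →ₗ[ℝ] Eucl m) =
      (ContinuousLinearMap.id ℝ (Eucl m) + (κ X - 1) • headProj m d : Eucl m →L[ℝ] Eucl m) ∘ₗ
        LinearMap.transvection (κ' : Eucl m →ₗ[ℝ] ℝ) ((κ X)⁻¹ • headProj m d X) := by
    refine LinearMap.ext fun Y => ?_
    simp only [axialScalingDeriv, ContinuousLinearMap.coe_coe, add_apply,
      ContinuousLinearMap.id_apply, smul_apply, LinearMap.comp_apply,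
      ContinuousLinearMap.smulRight_apply, LinearMap.transvection.apply, map_add, map_smul,
      headProj_headProj]
    match_scalars <;> field_simp
    ring
  rw [ContinuousLinearMap.det, hfactor, LinearMap.det_comp, ← ContinuousLinearMap.det,
    det_id_add_smul_headProj hdm, LinearMap.transvection.det]
  simp

theorem surjective_axialScaling (hκ : Continuous κ) {ε : ℝ} (hε : 0 < ε) (hκε : ∀ X, ε ≤ κ X) :
    Function.Surjective (axialScaling d κ) := by
  intro Y
  let ray : ℝ → Eucl m := fun t => axialScaling d (fun _ => t) Y
  have hray : Continuous ray := by
    unfold ray axialScaling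
    fun_prop
  have hval : (1 : ℝ) ∈ Icc (0 * κ (ray 0)) (1 / ε * κ (ray (1 / ε))) := by
    refine ⟨by simp, ?_⟩
    rw [div_mul_eq_mul_div, one_mul, one_le_div hε]
    exact hκε _
  obtain ⟨t, -, ht : t * κ (ray t) = 1⟩ := intermediate_value_Icc (by positivity)
    (continuous_id.mul (hκ.comp hray)).continuousOn hval
  refine ⟨ray t, ?_⟩
  have hhead : headProj m d (ray t) = t • headProj m d Y := headProj_axialScaling _ _
  calc axialScaling d κ (ray t)
      = Y + (t - 1) • headProj m d Y + (κ (ray t) - 1) • t • headProj m d Y := by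
        rw [axialScaling, hhead, show ray t = Y + (t - 1) • headProj m d Y from rfl]
    _ = Y + (t * κ (ray t) - 1) • headProj m d Y := by module
    _ = Y := by rw [ht, sub_self, zero_smul, add_zero]

end AxialScaling

section Profile

theorem mul_seminorm_sub_le {E : Type*} [AddCommGroup E] [Module ℝ E] (N : Seminorm ℝ E) {x y : E}
    {a b : ℝ} (ha : 0 ≤ a) (hab : a ≤ b) (hxy : N x ≤ N y) :
    b * N (y - x) ≤ 2 * N (b • y - a • x) := by
  have hN {t : ℝ} (ht : 0 ≤ t) (z : E) : N (t • z) = t * N z := by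
    rw [map_smul_eq_mul, Real.norm_of_nonneg ht]
  have hb : 0 ≤ b := ha.trans hab
  have hdiff : b * N (y - x) ≤ N (b • y - a • x) + (b - a) * N x := by
    rw [← hN hb, ← hN (sub_nonneg.2 hab)]
    exact (congrArg N (by module)).trans_le (map_sub_le_add N (b • y - a • x) ((b - a) • x))
  have houter : b * N y ≤ N (b • y - a • x) + a * N x := by
    rw [← hN hb, ← hN ha]
    exact (congrArg N (by module)).trans_le (map_add_le_add N (b • y - a • x) (a • x))
  linarith [mul_le_mul_of_nonneg_left hxy hb]

/-- A smooth scaling factor `f : ℝ^m → [δ, 1]`, equal to `1` where the gauge of `x'` exceeds the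
radius, increasing in that gauge with radial derivative at most `A`, and with slope at most
`Λ / radius` in the direction of `x''`. The gauge is a norm of `x'`, comparable to the Euclidean
one. -/
structure ShrinkingProfile (m d : ℕ) (A Λ : ℝ≥0) (δ : ℝ) where
  /-- The scaling factor. -/
  toFun : Eucl m → ℝ
  /-- A norm of the first `d` coordinates. -/
  gauge : Seminorm ℝ (Eucl m)
  /-- The gauge beyond which the scaling factor is `1`. -/
  radius : ℝ
  contDiff : ContDiff ℝ (⊤ : ℕ∞) toFun
  pos : 0 < δ
  le_toFun : ∀ X, δ ≤ toFun X
  toFun_le_one : ∀ X, toFun X ≤ 1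
  gauge_le : ∀ X, gauge X ≤ m * ‖headProj m d X‖
  norm_headProj_le : ∀ X, ‖headProj m d X‖ ≤ m * gauge X
  mono : ∀ ⦃X Y⦄, gauge X ≤ gauge Y → X - headProj m d X = Y - headProj m d Y → toFun X ≤ toFun Y
  eq_one_of_radius_le : ∀ ⦃X⦄, radius ≤ gauge X → toFun X = 1
  abs_sub_mul_radius_le : ∀ ⦃X Y⦄, headProj m d X = headProj m d Y →
    |toFun X - toFun Y| * radius ≤ Λ * ‖X - Y‖
  fderiv_headProj_le : ∀ X, fderiv ℝ toFun X (headProj m d X) ≤ A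

namespace ShrinkingProfile

variable {m d : ℕ} {A Λ : ℝ≥0} {δ : ℝ} (f : ShrinkingProfile m d A Λ δ) (n : ℕ)

instance : CoeFun (ShrinkingProfile m d A Λ δ) fun _ => Eucl m → ℝ := ⟨toFun⟩

theorem toFun_pos (X : Eucl m) : 0 < f X := f.pos.trans_le (f.le_toFun X)

/-- The contraction `(x', x'') ↦ (f(x)^n x', x'')`. -/
def map : Eucl m → Eucl m := axialScaling d fun X => f X ^ n

theorem gauge_eq_zero {X : Eucl m} (h : headProj m d X = 0) : f.gauge X = 0 :=
  le_antisymm ((f.gauge_le X).trans (by simp [h])) (apply_nonneg f.gauge X)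

theorem gauge_congr {X Y : Eucl m} (h : headProj m d X = headProj m d Y) :
    f.gauge X = f.gauge Y := by
  have hXY : f.gauge (X - Y) = 0 := f.gauge_eq_zero (by rw [map_sub, h, sub_self])
  have habs := abs_sub_map_le_sub f.gauge X Y
  rw [hXY, abs_nonpos_iff, sub_eq_zero] at habs
  exact habs

theorem gauge_pow_smul_sub_le (X Y : Eucl m) :
    f.gauge (f X ^ n • X - f Y ^ n • Y) ≤ m * ‖f.map n X - f.map n Y‖ := by
  have hproj : headProj m d (f X ^ n • X - f Y ^ n • Y)
      = headProj m d (f.map n X - f.map n Y) := by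
    simp only [map, map_sub, map_smul, headProj_axialScaling]
  refine (f.gauge_le _).trans ?_
  rw [hproj]
  gcongr
  exact ShrinkingBlock.norm_headProj_le _

theorem abs_pow_sub_pow_le (X Y : Eucl m) : |f X ^ n - f Y ^ n| ≤ n * |f X - f Y| := by
  have habs (Z : Eucl m) : |f Z| ≤ 1 := by
    rw [abs_of_pos (f.toFun_pos Z)]
    exact f.toFun_le_one Z
  calc |f X ^ n - f Y ^ n| ≤ |f X - f Y| * n * max |f X| |f Y| ^ (n - 1) :=
        _root_.abs_pow_sub_pow_le _ _ _
    _ ≤ |f X - f Y| * n * 1 := by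
        gcongr
        exact pow_le_one₀ (le_max_of_le_left (abs_nonneg _)) (max_le (habs X) (habs Y))
    _ = n * |f X - f Y| := by ring

theorem abs_pow_sub_pow_mul_gauge_le {X Y : Eucl m} (h : headProj m d X = headProj m d Y) :
    |f X ^ n - f Y ^ n| * f.gauge Y ≤ n * Λ * ‖X - Y‖ := by
  rcases le_total f.radius (f.gauge Y) with hY | hY
  · rw [f.eq_one_of_radius_le hY, f.eq_one_of_radius_le (hY.trans_eq (f.gauge_congr h).symm)]
    simp only [one_pow, sub_self, abs_zero, zero_mul]
    positivity
  · calc |f X ^ n - f Y ^ n| * f.gauge Y ≤ n * |f X - f Y| * f.radius := by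
          gcongr
          exact f.abs_pow_sub_pow_le n X Y
      _ ≤ n * (Λ * ‖X - Y‖) := by
          rw [mul_assoc]
          exact mul_le_mul_of_nonneg_left (f.abs_sub_mul_radius_le h) n.cast_nonneg
      _ = n * Λ * ‖X - Y‖ := by ring

theorem pow_mul_gauge_sub_le {X Y : Eucl m} (h : X - headProj m d X = Y - headProj m d Y) :
    f X ^ n * f.gauge (X - Y) ≤ 2 * f.gauge (f X ^ n • X - f Y ^ n • Y) := by
  have hpow {V W : Eucl m} (hVW : f V ≤ f W) : f V ^ n ≤ f W ^ n :=
    pow_le_pow_left₀ (f.toFun_pos V).le hVW n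
  rcases le_total (f.gauge Y) (f.gauge X) with hle | hle
  · exact mul_seminorm_sub_le f.gauge (pow_pos (f.toFun_pos Y) n).le (hpow (f.mono hle h.symm)) hle
  · rw [map_sub_rev f.gauge, map_sub_rev f.gauge (f X ^ n • X)]
    exact (mul_le_mul_of_nonneg_right (hpow (f.mono hle h)) (apply_nonneg _ _)).trans
      (mul_seminorm_sub_le f.gauge (pow_pos (f.toFun_pos X) n).le (hpow (f.mono hle h)) hle)

/-- The constant in `f(X)^n |X - Y| ≤ distortion * |map X - map Y|`. -/
def distortion (m n : ℕ) (Λ : ℝ≥0) : ℝ≥0 := m * (2 * (m + n * Λ)) + 1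

theorem norm_sub_sub_headProj_le (X Y : Eucl m) :
    ‖X - Y - headProj m d (X - Y)‖ ≤ ‖f.map n X - f.map n Y‖ := by
  have htail : X - Y - headProj m d (X - Y)
      = f.map n X - f.map n Y - headProj m d (f.map n X - f.map n Y) := by
    have hX := axialScaling_sub_headProj (d := d) (fun Z => f Z ^ n) X
    have hY := axialScaling_sub_headProj (d := d) (fun Z => f Z ^ n) Y
    rw [map_sub, map_sub, map, sub_sub_sub_comm, ← hX, ← hY]
    abel
  rw [htail]
  exact norm_sub_headProj_le _

theorem pow_mul_gauge_sub_le_norm_map_sub (X Y : Eucl m) :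
    f X ^ n * f.gauge (X - Y) ≤ 2 * (m + n * Λ) * ‖f.map n X - f.map n Y‖ := by
  -- `Z` has the head of `Y` and the tail of `X`
  set Z : Eucl m := headProj m d Y + (X - headProj m d X) with hZ
  have hZY : headProj m d Z = headProj m d Y := by simp [hZ, headProj_headProj]
  have hXZ : X - headProj m d X = Z - headProj m d Z := by rw [hZY, hZ]; abel
  have hZY_norm : ‖Z - Y‖ ≤ ‖f.map n X - f.map n Y‖ := by
    convert f.norm_sub_sub_headProj_le n X Y using 2
    rw [hZ, map_sub]
    abel
  have hXY : f.gauge (X - Y) = f.gauge (X - Z) := f.gauge_congr (by rw [map_sub, map_sub, hZY])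
  have hsmul : f.gauge (f X ^ n • X - f Z ^ n • Z) = f.gauge (f X ^ n • X - f Z ^ n • Y) :=
    f.gauge_congr (by simp only [map_sub, map_smul, hZY])
  have hsplit : f.gauge (f X ^ n • X - f Z ^ n • Y)
      ≤ f.gauge (f X ^ n • X - f Y ^ n • Y) + |f Z ^ n - f Y ^ n| * f.gauge Y := by
    rw [← Real.norm_eq_abs, ← map_smul_eq_mul]
    exact (congrArg f.gauge (by module)).trans_le (map_sub_le_add f.gauge _ _)
  have htail : |f Z ^ n - f Y ^ n| * f.gauge Y ≤ n * Λ * ‖f.map n X - f.map n Y‖ :=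
    (f.abs_pow_sub_pow_mul_gauge_le n hZY).trans (by gcongr)
  rw [hXY]
  linarith [f.pow_mul_gauge_sub_le n hXZ, f.gauge_pow_smul_sub_le n X Y]

theorem pow_mul_norm_sub_le (X Y : Eucl m) :
    f X ^ n * ‖X - Y‖ ≤ distortion m n Λ * ‖f.map n X - f.map n Y‖ := by
  have hpos : 0 ≤ f X ^ n := (pow_pos (f.toFun_pos X) n).le
  have hone : f X ^ n ≤ 1 := pow_le_one₀ (f.toFun_pos X).le (f.toFun_le_one X)
  have hsplit : ‖X - Y‖ ≤ ‖headProj m d (X - Y)‖ + ‖X - Y - headProj m d (X - Y)‖ := by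
    simpa using norm_add_le (headProj m d (X - Y)) (X - Y - headProj m d (X - Y))
  calc f X ^ n * ‖X - Y‖
      ≤ f X ^ n * (m * f.gauge (X - Y)) + 1 * ‖X - Y - headProj m d (X - Y)‖ := by
        refine (mul_le_mul_of_nonneg_left hsplit hpos).trans ?_
        rw [mul_add]
        gcongr
        exact f.norm_headProj_le _
    _ ≤ m * (2 * (m + n * Λ) * ‖f.map n X - f.map n Y‖) + 1 * ‖f.map n X - f.map n Y‖ := by
        rw [mul_left_comm]
        exact add_le_add
          (mul_le_mul_of_nonneg_left (f.pow_mul_gauge_sub_le_norm_map_sub n X Y) m.cast_nonneg)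
          (mul_le_mul_of_nonneg_left (f.norm_sub_sub_headProj_le n X Y) zero_le_one)
    _ = distortion m n Λ * ‖f.map n X - f.map n Y‖ := by
        simp only [distortion, NNReal.coe_add, NNReal.coe_mul, NNReal.coe_natCast, NNReal.coe_one,
          NNReal.coe_ofNat]
        ring

theorem antilipschitzWith_map :
    AntilipschitzWith (distortion m n Λ / (δ ^ n).toNNReal) (f.map n) := by
  have hδ : 0 < δ ^ n := pow_pos f.pos n
  refine AntilipschitzWith.of_le_mul_dist fun X Y => ?_
  rw [dist_eq_norm, dist_eq_norm, NNReal.coe_div, Real.coe_toNNReal _ hδ.le, div_mul_eq_mul_div,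
    le_div_iff₀ hδ, mul_comm]
  exact (mul_le_mul_of_nonneg_right (pow_le_pow_left₀ f.pos.le (f.le_toFun X) n)
    (norm_nonneg _)).trans (f.pow_mul_norm_sub_le n X Y)

theorem contDiff_map : ContDiff ℝ (⊤ : ℕ∞) (f.map n) := contDiff_axialScaling (f.contDiff.pow n)

/-- The contraction `f.map n` as a homeomorphism of `ℝ^m`. -/
def homeomorph : Eucl m ≃ₜ Eucl m where
  toEquiv := Equiv.ofBijective (f.map n) ⟨(f.antilipschitzWith_map n).injective,
    surjective_axialScaling (f.contDiff.continuous.pow n) (pow_pos f.pos n) fun X =>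
      pow_le_pow_left₀ f.pos.le (f.le_toFun X) n⟩
  continuous_toFun := (f.contDiff_map n).continuous
  continuous_invFun :=
    ((f.antilipschitzWith_map n).to_rightInverse
      (Equiv.ofBijective (f.map n) _).right_inv).continuous

@[simp]
theorem homeomorph_apply (X : Eucl m) : f.homeomorph n X = f.map n X := rfl

end ShrinkingProfile

end Profile

section Jacobian

theorem lintegral_image_mutualEnergy {E : Type*} [NormedAddCommGroup E] [NormedSpace ℝ E]
    [FiniteDimensional ℝ E] [MeasurableSpace E] [BorelSpace E] (μ : Measure E) [μ.IsAddHaarMeasure]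
    {Ψ : E → E} {Ψ' : E → E →L[ℝ] E} (hΨ' : ∀ x, HasFDerivAt Ψ (Ψ' x) x)
    (hΨ : Function.Injective Ψ) {A B : Set E} (hA : MeasurableSet A) (hB : MeasurableSet B)
    (e : E → E → ℝ≥0∞) :
    mutualEnergy μ e (Ψ '' A) (Ψ '' B) = mutualEnergy μ (fun x y =>
      ENNReal.ofReal |(Ψ' x).det| * (ENNReal.ofReal |(Ψ' y).det| * e (Ψ x) (Ψ y))) A B := by
  rw [mutualEnergy, lintegral_image_eq_lintegral_abs_det_fderiv_mul μ hA
    (fun x _ => (hΨ' x).hasFDerivWithinAt) hΨ.injOn]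
  refine lintegral_congr fun x => ?_
  rw [lintegral_image_eq_lintegral_abs_det_fderiv_mul μ hB
    (fun x _ => (hΨ' x).hasFDerivWithinAt) hΨ.injOn,
    ← lintegral_const_mul' _ _ ENNReal.ofReal_ne_top]

theorem rpow_mul_rieszKernel_le_anisotropicKernel {ι : Type*} [Fintype ι] {β : ℝ} (hβ : 0 < β)
    {γ : ι → ℝ} (hγ : ∀ i, 0 ≤ γ i) {a C : ℝ≥0} (hC : C ≠ 0) {H H' : EuclideanSpace ℝ ι}
    (hH' : H' ≠ 0) (ha : a * ‖H‖ₑ ≤ C * ‖H'‖ₑ) (hi : ∀ i, γ i ≠ 0 → ‖H i‖ₑ ≤ ‖H'‖ₑ) :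
    (a : ℝ≥0∞) ^ β * rieszKernel (β + ∑ i, γ i) H' ≤ (C : ℝ≥0∞) ^ β * anisotropicKernel β γ H := by
  have hne : ‖H'‖ₑ ≠ 0 := enorm_ne_zero.2 hH'
  have hprod : ‖H'‖ₑ ^ (-∑ i, γ i) ≤ ∏ i, ‖H i‖ₑ ^ (-γ i) := by
    calc ‖H'‖ₑ ^ (-∑ i, γ i) = ∏ i, ‖H'‖ₑ ^ (-γ i) := by
          rw [← Finset.sum_neg_distrib, ← ofReal_norm]
          simp_rw [ENNReal.ofReal_rpow_of_pos (norm_pos_iff.2 hH')]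
          rw [← ENNReal.ofReal_prod_of_nonneg fun i _ => by positivity,
            Real.rpow_sum_of_pos (norm_pos_iff.2 hH')]
      _ ≤ ∏ i, ‖H i‖ₑ ^ (-γ i) := Finset.prod_le_prod' fun i _ => by
          rcases eq_or_ne (γ i) 0 with h | h
          · simp [h]
          · simp_rw [ENNReal.rpow_neg]
            exact ENNReal.inv_le_inv.2 (ENNReal.rpow_le_rpow (hi i h) (hγ i))
  have hhead : (a : ℝ≥0∞) ^ β * ‖H'‖ₑ ^ (-β) ≤ (C : ℝ≥0∞) ^ β * ‖H‖ₑ ^ (-β) := by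
    simp_rw [ENNReal.rpow_neg, ← div_eq_mul_inv]
    rw [← ENNReal.div_rpow_of_nonneg _ _ hβ.le, ← ENNReal.div_rpow_of_nonneg _ _ hβ.le]
    refine ENNReal.rpow_le_rpow ?_ hβ.le
    rw [ENNReal.le_div_iff_mul_le (.inr (by simpa)) (.inl enorm_ne_top), div_eq_mul_inv,
      mul_right_comm, ← div_eq_mul_inv, ENNReal.div_le_iff_le_mul (.inl hne) (.inl enorm_ne_top)]
    exact ha
  calc (a : ℝ≥0∞) ^ β * ‖H'‖ₑ ^ (-(β + ∑ i, γ i))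
      = (a : ℝ≥0∞) ^ β * ‖H'‖ₑ ^ (-β) * ‖H'‖ₑ ^ (-∑ i, γ i) := by
        rw [neg_add, ENNReal.rpow_add _ _ hne enorm_ne_top, mul_assoc]
    _ ≤ (C : ℝ≥0∞) ^ β * ‖H‖ₑ ^ (-β) * ∏ i, ‖H i‖ₑ ^ (-γ i) := mul_le_mul' hhead hprod
    _ = (C : ℝ≥0∞) ^ β * anisotropicKernel β γ H := by rw [anisotropicKernel, mul_assoc]

/-- A splitting `θ = β + ∑ᵢ γᵢ` of the exponent of a Riesz kernel between `|H|` and the last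
`m - d` coordinates of `H`, such that the Jacobian of a contraction by `f^n` compensates the growth
of the first factor with a power of `f` to spare. -/
structure KernelExponents (m d n : ℕ) (θ : ℝ) where
  /-- The exponent of `|H|`. -/
  β : ℝ
  /-- The exponents of the coordinates of `H`. -/
  γ : Fin m → ℝ
  β_pos : 0 < β
  mul_β_le : n * β ≤ 2 * (n * d : ℕ) - 3
  γ_nonneg : ∀ i, 0 ≤ γ i
  γ_lt_one : ∀ i, γ i < 1
  γ_eq_zero : ∀ i : Fin m, (i : ℕ) < d → γ i = 0
  add_sum : β + ∑ i, γ i = θ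

namespace KernelExponents

variable {m d n : ℕ} {θ : ℝ}

theorem two_le (E : KernelExponents m d n θ) : 2 ≤ n * d := by
  have hβ : 0 ≤ n * E.β := mul_nonneg n.cast_nonneg E.β_pos.le
  have hnd : (1 : ℝ) < (n * d : ℕ) := by linarith [E.mul_β_le]
  exact_mod_cast hnd

theorem n_ne_zero (E : KernelExponents m d n θ) : n ≠ 0 :=
  left_ne_zero_of_mul (by linarith [E.two_le] : n * d ≠ 0)

theorem d_ne_zero (E : KernelExponents m d n θ) : d ≠ 0 :=
  right_ne_zero_of_mul (by linarith [E.two_le] : n * d ≠ 0)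

end KernelExponents

theorem pow_mul_pow_le_mul_rpow {a b β : ℝ} {n N : ℕ} (ha : 0 ≤ a) (hab : a ≤ b) (hb0 : 0 < b)
    (hb1 : b ≤ 1) (hN : 2 ≤ N) (hβ : n * β ≤ 2 * N - 3) :
    a ^ (N - 1) * b ^ (N - 1) ≤ a * (b ^ n) ^ β := by
  obtain ⟨k, rfl⟩ := Nat.exists_eq_add_of_le' hN
  calc a ^ (k + 1) * b ^ (k + 1) = a * a ^ k * b ^ (k + 1) := by ring
    _ ≤ a * b ^ k * b ^ (k + 1) := by
        gcongr a * ?_ * _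
        exact pow_le_pow_left₀ ha hab k
    _ = a * b ^ ((2 * k + 1 : ℕ) : ℝ) := by
        rw [Real.rpow_natCast]
        ring
    _ ≤ a * b ^ (n * β) := by
        refine mul_le_mul_of_nonneg_left (Real.rpow_le_rpow_of_exponent_ge hb0 hb1 ?_) ha
        push_cast at hβ ⊢
        linarith
    _ = a * (b ^ n) ^ β := by rw [Real.rpow_mul hb0.le, Real.rpow_natCast]

namespace ShrinkingProfile

variable {m d : ℕ} {A Λ : ℝ≥0} {δ : ℝ} (f : ShrinkingProfile m d A Λ δ) {n : ℕ}

theorem fderiv_headProj_nonneg (X : Eucl m) : 0 ≤ fderiv ℝ f X (headProj m d X) := by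
  have hmin : IsMinOn f (segment ℝ X (X + headProj m d X)) X := by
    rintro Y ⟨a, b, -, hb, hab, rfl⟩
    have hY : a • X + b • (X + headProj m d X) = X + b • headProj m d X := by
      rw [smul_add, ← add_assoc, ← add_smul, hab, one_smul]
    have hhead : headProj m d (X + b • headProj m d X) = headProj m d ((1 + b) • X) := by
      simp only [map_add, map_smul, headProj_headProj, add_smul, one_smul]
    rw [hY]
    refine f.mono ?_ ?_
    · rw [f.gauge_congr hhead, map_smul_eq_mul, Real.norm_of_nonneg (by positivity)]
      exact le_mul_of_one_le_left (apply_nonneg _ _) (by linarith)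
    · rw [hhead, map_smul]
      module
  have hf : HasFDerivAt f (fderiv ℝ f X) X :=
    ((f.contDiff.differentiable (by simp)) X).hasFDerivAt
  exact hmin.localize.hasFDerivWithinAt_nonneg hf.hasFDerivWithinAt
    (mem_posTangentConeAt_of_segment_subset subset_rfl)

/-- The differential of `f.map n`. -/
def deriv (n : ℕ) (X : Eucl m) : Eucl m →L[ℝ] Eucl m :=
  axialScalingDeriv d (fun X => f X ^ n) ((n • f X ^ (n - 1)) • fderiv ℝ f X) X

theorem hasFDerivAt_map (n : ℕ) (X : Eucl m) : HasFDerivAt (f.map n) (f.deriv n X) X :=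
  hasFDerivAt_axialScaling (((f.contDiff.differentiable (by simp)) X).hasFDerivAt.pow n)

theorem det_deriv (hdm : d ≤ m) (n : ℕ) (X : Eucl m) :
    (f.deriv n X).det = (f X ^ n) ^ d
      * (1 + (f X ^ n)⁻¹ * (n * f X ^ (n - 1) * fderiv ℝ f X (headProj m d X))) := by
  rw [deriv, det_axialScalingDeriv hdm (pow_pos (f.toFun_pos X) n).ne']
  simp

theorem det_deriv_pos (hdm : d ≤ m) (n : ℕ) (X : Eucl m) : 0 < (f.deriv n X).det := by
  have hX := f.toFun_pos X
  have hder := f.fderiv_headProj_nonneg X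
  rw [det_deriv f hdm]
  positivity

theorem det_deriv_le (hdm : d ≤ m) (hnd : n * d ≠ 0) (X : Eucl m) :
    (f.deriv n X).det ≤ (1 + n * A) * f X ^ (n * d - 1) := by
  have hX := f.toFun_pos X
  obtain ⟨k, hk⟩ := Nat.exists_eq_add_one_of_ne_zero hnd
  obtain ⟨l, rfl⟩ := Nat.exists_eq_add_one_of_ne_zero (left_ne_zero_of_mul hnd)
  rw [det_deriv f hdm, ← pow_mul, hk, Nat.add_sub_cancel, Nat.add_sub_cancel]
  calc f X ^ (k + 1) * (1 + (f X ^ (l + 1))⁻¹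
        * ((l + 1 : ℕ) * f X ^ l * fderiv ℝ f X (headProj m d X)))
      = f X ^ k * (f X + (l + 1 : ℕ) * fderiv ℝ f X (headProj m d X)) := by
        field_simp
        ring
    _ ≤ f X ^ k * (1 + (l + 1 : ℕ) * A) := by
        gcongr
        · exact f.toFun_le_one X
        · exact f.fderiv_headProj_le X
    _ = (1 + (l + 1 : ℕ) * A) * f X ^ k := mul_comm _ _

theorem contDiff_homeomorph_symm (hdm : d ≤ m) (n : ℕ) :
    ContDiff ℝ (⊤ : ℕ∞) (f.homeomorph n).symm :=
  (f.homeomorph n).contDiff_symm (f₀' := fun X =>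
    (f.deriv n X).toContinuousLinearEquivOfDetNeZero (f.det_deriv_pos hdm n X).ne')
    (fun X => by
      rw [ContinuousLinearMap.coe_toContinuousLinearEquivOfDetNeZero]
      exact f.hasFDerivAt_map n X) (f.contDiff_map n)

/-- The constant relating the Riesz kernel after contraction to the anisotropic kernel before. -/
def kernelConst (m n : ℕ) (A Λ : ℝ≥0) (β : ℝ) : ℝ≥0 := (1 + n * A) ^ 2 * distortion m n Λ ^ β

theorem ofReal_det_mul_ofReal_det_le (hdm : d ≤ m) {θ : ℝ} (E : KernelExponents m d n θ)
    {X Y : Eucl m} (hle : f X ≤ f Y) :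
    ENNReal.ofReal |(f.deriv n X).det| * ENNReal.ofReal |(f.deriv n Y).det|
      ≤ ((1 + n * A) ^ 2 : ℝ≥0) * ENNReal.ofReal (f X) * ENNReal.ofReal (f Y ^ n) ^ E.β := by
  have hX := f.toFun_pos X
  have hY := f.toFun_pos Y
  have hnd := E.two_le
  have hdetX := f.det_deriv_pos hdm n X
  have hdetY := f.det_deriv_pos hdm n Y
  rw [abs_of_pos hdetX, abs_of_pos hdetY, ENNReal.ofReal_rpow_of_pos (pow_pos hY n),
    ← ENNReal.ofReal_coe_nnreal, ← ENNReal.ofReal_mul hdetX.le,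
    ← ENNReal.ofReal_mul NNReal.zero_le_coe, ← ENNReal.ofReal_mul (by positivity)]
  refine ENNReal.ofReal_le_ofReal ?_
  calc (f.deriv n X).det * (f.deriv n Y).det
      ≤ (1 + n * A) * f X ^ (n * d - 1) * ((1 + n * A) * f Y ^ (n * d - 1)) := by
        gcongr
        · exact f.det_deriv_le hdm (by lia) X
        · exact f.det_deriv_le hdm (by lia) Y
    _ = (1 + n * A) ^ 2 * (f X ^ (n * d - 1) * f Y ^ (n * d - 1)) := by ring
    _ ≤ (1 + n * A) ^ 2 * (f X * (f Y ^ n) ^ E.β) := by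
        refine mul_le_mul_of_nonneg_left ?_ (by positivity)
        exact pow_mul_pow_le_mul_rpow hX.le hle hY (f.toFun_le_one Y) hnd E.mul_β_le
    _ = ((1 + n * A) ^ 2 : ℝ≥0) * f X * (f Y ^ n) ^ E.β := by
        push_cast
        ring

theorem rpow_mul_rieszKernel_map_sub_le {θ : ℝ} (E : KernelExponents m d n θ) {X Y : Eucl m}
    (hXY : X ≠ Y) :
    ENNReal.ofReal (f Y ^ n) ^ E.β * rieszKernel θ (f.map n X - f.map n Y)
      ≤ (distortion m n Λ : ℝ≥0∞) ^ E.β * anisotropicKernel E.β E.γ (X - Y) := by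
  rw [congrArg rieszKernel E.add_sum.symm]
  refine rpow_mul_rieszKernel_le_anisotropicKernel E.β_pos E.γ_nonneg
    (by simp [distortion]) (sub_ne_zero.2 ((f.antilipschitzWith_map n).injective.ne hXY)) ?_ ?_
  · rw [← ENNReal.ofReal, ← ofReal_norm, ← ofReal_norm, ← ENNReal.ofReal_coe_nnreal,
      ← ENNReal.ofReal_mul (pow_pos (f.toFun_pos Y) n).le, ← ENNReal.ofReal_mul NNReal.zero_le_coe,
      norm_sub_rev X, norm_sub_rev (f.map n X)]
    exact ENNReal.ofReal_le_ofReal (f.pow_mul_norm_sub_le n Y X)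
  · intro i hi
    have hdi : d ≤ i := not_lt.1 fun h => hi (E.γ_eq_zero i h)
    have htail : (X - Y) i = (f.map n X - f.map n Y) i := by
      rw [PiLp.sub_apply, PiLp.sub_apply, map, axialScaling_apply_of_le _ _ hdi,
        axialScaling_apply_of_le _ _ hdi]
    rw [htail]
    exact enorm_le_iff_norm_le.2 (PiLp.norm_apply_le _ i)

theorem det_mul_det_mul_rieszKernel_le_of_le (hdm : d ≤ m) {θ : ℝ} (E : KernelExponents m d n θ)
    {X Y : Eucl m} (hXY : X ≠ Y) (hle : f X ≤ f Y) :
    ENNReal.ofReal |(f.deriv n X).det| * ENNReal.ofReal |(f.deriv n Y).det|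
        * rieszKernel θ (f.map n X - f.map n Y)
      ≤ kernelConst m n A Λ E.β
        * (ENNReal.ofReal (f X) * anisotropicKernel E.β E.γ (X - Y)) := by
  calc _ ≤ ((1 + n * A) ^ 2 : ℝ≥0) * ENNReal.ofReal (f X) * ENNReal.ofReal (f Y ^ n) ^ E.β
        * rieszKernel θ (f.map n X - f.map n Y) :=
        mul_le_mul_left (f.ofReal_det_mul_ofReal_det_le hdm E hle) _
    _ ≤ ((1 + n * A) ^ 2 : ℝ≥0) * ENNReal.ofReal (f X)
        * ((distortion m n Λ : ℝ≥0∞) ^ E.β * anisotropicKernel E.β E.γ (X - Y)) := by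
        rw [mul_assoc]
        exact mul_le_mul_right (f.rpow_mul_rieszKernel_map_sub_le E hXY) _
    _ = _ := by
        rw [kernelConst, ENNReal.coe_mul, ENNReal.coe_rpow_of_nonneg _ E.β_pos.le]
        ring

theorem det_mul_det_mul_rieszKernel_le (hdm : d ≤ m) {θ : ℝ} (E : KernelExponents m d n θ)
    {X Y : Eucl m} (hXY : X ≠ Y) :
    ENNReal.ofReal |(f.deriv n X).det| * ENNReal.ofReal |(f.deriv n Y).det|
        * rieszKernel θ (f.map n X - f.map n Y)
      ≤ kernelConst m n A Λ E.β
        * (ENNReal.ofReal (min (f X) (f Y)) * anisotropicKernel E.β E.γ (X - Y)) := by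
  rcases le_total (f X) (f Y) with hle | hle
  · rw [min_eq_left hle]
    exact f.det_mul_det_mul_rieszKernel_le_of_le hdm E hXY hle
  · have h := f.det_mul_det_mul_rieszKernel_le_of_le hdm E hXY.symm hle
    rwa [min_eq_right hle, mul_comm (ENNReal.ofReal _) (ENNReal.ofReal _), ← neg_sub (f.map n Y),
      ← neg_sub Y X, anisotropicKernel_neg, rieszKernel, enorm_neg]

end ShrinkingProfile

end Jacobian

section Energy

variable {F : Type*} [NormedAddCommGroup F] {m d n : ℕ} {A Λ : ℝ≥0} {δ θ p : ℝ}

namespace ShrinkingProfile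

/-- The anisotropic energy density which dominates, up to a constant, the Gagliardo density of
`u` transported by the contraction `f.map n`. -/
def weightedDensity (f : ShrinkingProfile m d A Λ δ) (E : KernelExponents m d n θ) (p : ℝ)
    (u : Eucl m → F) (X Y : Eucl m) : ℝ≥0∞ :=
  ENNReal.ofReal (min (f X) (f Y)) * diffDensity p (anisotropicKernel E.β E.γ) u X Y

variable (f : ShrinkingProfile m d A Λ δ) (E : KernelExponents m d n θ)

theorem measurable_weightedDensity (p : ℝ) {u : Eucl m → F} (hu : StronglyMeasurable u) :
    Measurable (Function.uncurry (f.weightedDensity E p u)) := by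
  have hf := f.contDiff.continuous.measurable
  exact ((hf.comp measurable_fst).min (hf.comp measurable_snd)).ennreal_ofReal.mul
    (measurable_diffDensity (measurable_anisotropicKernel E.β E.γ) p hu)

theorem weightedDensity_comm (p : ℝ) (u : Eucl m → F) (X Y : Eucl m) :
    f.weightedDensity E p u X Y = f.weightedDensity E p u Y X := by
  rw [weightedDensity, min_comm, diffDensity_comm (anisotropicKernel_neg _ _), weightedDensity]

theorem image_map_eq_preimage (ω : Set (Eucl m)) :
    f.map n '' ω = (f.homeomorph n).symm ⁻¹' ω :=
  ((f.homeomorph n).preimage_symm ▸ rfl)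

theorem mutualEnergy_preimage_le (hdm : d ≤ m) (hp : 0 < p) {ω : Set (Eucl m)}
    (hω : MeasurableSet ω) (u : Eucl m → F) :
    mutualEnergy volume (diffDensity p (rieszKernel θ) (u ∘ (f.homeomorph n).symm))
        ((f.homeomorph n).symm ⁻¹' ω) ((f.homeomorph n).symm ⁻¹' ω)
      ≤ kernelConst m n A Λ E.β * mutualEnergy volume (f.weightedDensity E p u) ω ω := by
  rw [← f.image_map_eq_preimage, lintegral_image_mutualEnergy volume (f.hasFDerivAt_map n)
    (f.antilipschitzWith_map n).injective hω hω]
  refine mutualEnergy_le_const_mul _ hω hω fun X _ Y _ => ?_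
  have hinv (Z : Eucl m) : (f.homeomorph n).symm (f.map n Z) = Z :=
    (f.homeomorph n).symm_apply_apply Z
  simp only [diffDensity, weightedDensity, Function.comp_apply, hinv]
  rcases eq_or_ne X Y with rfl | hXY
  · simp [ENNReal.zero_rpow_of_pos hp]
  · calc _ = ‖u X - u Y‖ₑ ^ p * (ENNReal.ofReal |(f.deriv n X).det|
          * ENNReal.ofReal |(f.deriv n Y).det| * rieszKernel θ (f.map n X - f.map n Y)) := by ring
      _ ≤ ‖u X - u Y‖ₑ ^ p * (kernelConst m n A Λ E.β
          * (ENNReal.ofReal (min (f X) (f Y)) * anisotropicKernel E.β E.γ (X - Y))) :=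
          mul_le_mul_right (f.det_mul_det_mul_rieszKernel_le hdm E hXY) _
      _ = _ := by ring

theorem mutualEnergy_weightedDensity_le {G Q : Set (Eucl m)} (hG : MeasurableSet G)
    (hQ : MeasurableSet Q) (hfQ : ∀ X ∈ Q, f X = δ) {u : Eucl m → F} (hu : StronglyMeasurable u) :
    mutualEnergy volume (f.weightedDensity E p u) (G ∪ Q) (G ∪ Q)
      ≤ mutualEnergy volume (diffDensity p (anisotropicKernel E.β E.γ) u) G G
        + δ.toNNReal * (2 * mutualEnergy volume (diffDensity p (anisotropicKernel E.β E.γ) u) G Q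
          + mutualEnergy volume (diffDensity p (anisotropicKernel E.β E.γ) u) Q Q) := by
  have hGG : mutualEnergy volume (f.weightedDensity E p u) G G
      ≤ (1 : ℝ≥0) * mutualEnergy volume (diffDensity p (anisotropicKernel E.β E.γ) u) G G :=
    mutualEnergy_le_const_mul 1 hG hG fun X _ Y _ => mul_le_mul_left
      (ENNReal.ofReal_le_of_le_toReal (by simpa using .inl (f.toFun_le_one X))) _
  have hδ {B : Set (Eucl m)} (hB : MeasurableSet B) :
      mutualEnergy volume (f.weightedDensity E p u) B Q
        ≤ δ.toNNReal * mutualEnergy volume (diffDensity p (anisotropicKernel E.β E.γ) u) B Q :=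
    mutualEnergy_le_const_mul _ hB hQ fun X _ Y hY => mul_le_mul_left
      (ENNReal.ofReal_le_ofReal ((min_le_right _ _).trans_eq (hfQ Y hY))) _
  calc _ ≤ _ := mutualEnergy_union_self_le (f.measurable_weightedDensity E p hu)
        (f.weightedDensity_comm E p u)
    _ ≤ _ := add_le_add_three hGG (mul_le_mul_right (hδ hG) 2) (hδ hQ)
    _ = _ := by
        rw [ENNReal.coe_one, one_mul]
        ring

end ShrinkingProfile

theorem add_mul_two_mul_add_le {K M MQ T δ : ℝ≥0} {a b x y z : ℝ≥0∞} (hx : x ≤ K * M * (a + a))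
    (hy : y ≤ K * M * (a + b)) (hz : z ≤ K * MQ * (b + b)) (hδ : δ ≤ 1) (hδT : δ ≤ T)
    (hδMQ : δ * MQ ≤ T) :
    x + δ * (2 * y + z) ≤ (K * (4 * M + 2) : ℝ≥0) * (a + T * b) := by
  calc x + δ * (2 * y + z)
      ≤ K * M * (a + a) + δ * (2 * (K * M * (a + b)) + K * MQ * (b + b)) := by gcongr
    _ = K * (2 * M * a + δ * 2 * M * a + 2 * M * δ * b + 2 * (δ * MQ : ℝ≥0) * b) := by
        push_cast
        ring
    _ ≤ K * (2 * M * a + 1 * 2 * M * a + 2 * M * T * b + 2 * T * b) := by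
        gcongr
        exact_mod_cast hδ
    _ ≤ K * (2 * M * a + 1 * 2 * M * a + 2 * M * T * b + 2 * T * b
          + (2 * a + 2 * M * T * b)) := mul_le_mul_right le_self_add _
    _ = (K * (4 * M + 2) : ℝ≥0) * (a + T * b) := by
        push_cast
        ring

theorem exists_gagliardoPow_preimage_le (hdm : d ≤ m) {s : ℝ} (hp : 1 ≤ p)
    (E : KernelExponents m d n (m + s * p)) (A Λ M : ℝ≥0) :
    ∃ C : ℝ≥0, ∀ (MQ T : ℝ≥0) (δ : ℝ) (f : ShrinkingProfile m d A Λ δ), δ.toNNReal ≤ T →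
      δ.toNNReal * MQ ≤ T → ∀ Q ω : Set (Eucl m), MeasurableSet Q → MeasurableSet ω → Q ⊆ ω →
      (∀ X ∈ Q, f X = δ) → IsThickAlong volume m M (ω \ Q) ω → IsThickAlong volume m MQ Q Q →
      ∀ u : Eucl m → F, StronglyMeasurable u →
        gagliardoPow m s p ((f.homeomorph n).symm ⁻¹' ω) (u ∘ (f.homeomorph n).symm)
          ≤ C * (gagliardoPow m s p (ω \ Q) u + T * gagliardoPow m s p ω u) := by
  have : Nonempty (Fin m) := ⟨0, E.d_ne_zero.bot_lt.trans_le hdm⟩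
  obtain ⟨K, hK⟩ := exists_mutualEnergy_anisotropicKernel_le (F := F) hp E.β_pos E.γ_nonneg
    E.γ_lt_one
  rw [E.add_sum, Fintype.card_fin] at hK
  refine ⟨ShrinkingProfile.kernelConst m n A Λ E.β * (K * (4 * M + 2)),
    fun MQ T δ f hδT hδMQ Q ω hQ hω hQω hfQ hthick hthickQ u hu => ?_⟩
  have hGm : MeasurableSet (ω \ Q) := hω.diff hQ
  have hδ1 : δ.toNNReal ≤ 1 := Real.toNNReal_le_one.2 ((f.le_toFun 0).trans (f.toFun_le_one 0))
  have hGG := hK M _ _ (hthick.mono_right sdiff_subset) hGm hGm u hu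
  have hGQ := (hK M _ _ (hthick.mono_right hQω) hGm hQ u hu).trans
    (mul_le_mul_right (add_le_add_right (mutualEnergy_mono_set hQω sdiff_subset) _) _)
  have hQQ := (hK MQ _ _ hthickQ hQ hQ u hu).trans (mul_le_mul_right
    (add_le_add (mutualEnergy_mono_set hQω hQω) (mutualEnergy_mono_set hQω hQω)) _)
  have hweighted := f.mutualEnergy_weightedDensity_le E (p := p) hGm hQ hfQ hu
  rw [sdiff_union_of_subset hQω] at hweighted
  simp only [gagliardoPow_eq_mutualEnergy]
  refine (f.mutualEnergy_preimage_le E hdm (zero_lt_one.trans_le hp) hω u).trans ?_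
  rw [ENNReal.coe_mul, mul_assoc]
  exact mul_le_mul_right
    (hweighted.trans (add_mul_two_mul_add_le hGG hGQ hQQ hδ1 hδT hδMQ)) _

theorem lintegral_comp_preimage_le (f : ShrinkingProfile m d A Λ δ) (hdm : d ≤ m)
    (hnd : 2 ≤ n * d) {Q ω : Set (Eucl m)} (hQ : MeasurableSet Q) (hω : MeasurableSet ω)
    (hQω : Q ⊆ ω) (hfQ : ∀ X ∈ Q, f X = δ) (g : Eucl m → ℝ≥0∞) :
    ∫⁻ x in (f.homeomorph n).symm ⁻¹' ω, g ((f.homeomorph n).symm x)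
      ≤ (1 + n * A : ℝ≥0) * ((∫⁻ X in ω \ Q, g X) + δ.toNNReal * ∫⁻ X in ω, g X) := by
  have hdet (X : Eucl m) : ENNReal.ofReal |(f.deriv n X).det|
      ≤ (1 + n * A : ℝ≥0) * ENNReal.ofReal (f X) := by
    rw [abs_of_pos (f.det_deriv_pos hdm n X), ← ENNReal.ofReal_coe_nnreal,
      ← ENNReal.ofReal_mul NNReal.zero_le_coe]
    refine ENNReal.ofReal_le_ofReal ((f.det_deriv_le hdm (by lia) X).trans ?_)
    push_cast
    gcongr
    exact pow_le_of_le_one (f.toFun_pos X).le (f.toFun_le_one X) (by lia)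
  rw [← f.image_map_eq_preimage, lintegral_image_eq_lintegral_abs_det_fderiv_mul volume hω
    (fun X _ => (f.hasFDerivAt_map n X).hasFDerivWithinAt)
    (f.antilipschitzWith_map n).injective.injOn]
  have hinv (X : Eucl m) : (f.homeomorph n).symm (f.map n X) = X :=
    (f.homeomorph n).symm_apply_apply X
  simp only [hinv]
  calc ∫⁻ X in ω, ENNReal.ofReal |(f.deriv n X).det| * g X
      ≤ ∫⁻ X in ω, (1 + n * A : ℝ≥0) * (ENNReal.ofReal (f X) * g X) := by
        refine lintegral_mono fun X => ?_
        rw [← mul_assoc]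
        exact mul_le_mul_left (hdet X) _
    _ = (1 + n * A : ℝ≥0) * ∫⁻ X in ω \ Q ∪ Q, ENNReal.ofReal (f X) * g X := by
        rw [lintegral_const_mul' _ _ ENNReal.coe_ne_top, sdiff_union_of_subset hQω]
    _ ≤ (1 + n * A : ℝ≥0) * ((∫⁻ X in ω \ Q, 1 * g X) + ∫⁻ X in Q, δ.toNNReal * g X) := by
        refine mul_le_mul_right ((lintegral_union_le _ _ _).trans (add_le_add ?_ ?_)) _
        · exact lintegral_mono fun X =>
            mul_le_mul_left (ENNReal.ofReal_le_one.2 (f.toFun_le_one X)) _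
        · exact setLIntegral_mono' hQ fun X hX => by rw [hfQ X hX, ENNReal.ofReal]
    _ ≤ (1 + n * A : ℝ≥0) * ((∫⁻ X in ω \ Q, g X) + δ.toNNReal * ∫⁻ X in ω, g X) := by
        simp only [one_mul]
        rw [lintegral_const_mul' _ _ ENNReal.coe_ne_top]
        gcongr _ * (_ + _ * ?_)
        exact lintegral_mono_set hQω

end Energy

section Existence

theorem exists_lipschitzWith_smoothTransition : ∃ K, LipschitzWith K Real.smoothTransition := by
  obtain ⟨K, hK⟩ := (Real.smoothTransition.contDiff (n := 1)).contDiffOn.exists_lipschitzOnWith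
    one_ne_zero (convex_Icc (0 : ℝ) 1) isCompact_Icc
  refine ⟨K, LipschitzWith.of_dist_le_mul fun x y => ?_⟩
  rw [← Real.smoothTransition.projIcc (x := x), ← Real.smoothTransition.projIcc (x := y)]
  refine (hK.dist_le_mul _ (projIcc 0 1 zero_le_one x).2 _ (projIcc 0 1 zero_le_one y).2).trans ?_
  gcongr
  exact ((LipschitzWith.projIcc zero_le_one).dist_le_mul x y).trans_eq (one_mul _)

/-- A smooth function of one variable vanishing on `[-B, B]` and at least `1` outside
`(-B - v, B + v)`. -/
def edgeCutoff (B v t : ℝ) : ℝ :=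
  Real.smoothTransition ((t - B) / v) + Real.smoothTransition ((-t - B) / v)

section EdgeCutoff

variable {B v t : ℝ} {K : ℝ≥0}

theorem contDiff_edgeCutoff : ContDiff ℝ (⊤ : ℕ∞) (edgeCutoff B v) := by
  have hS := Real.smoothTransition.contDiff (n := (⊤ : ℕ∞))
  exact (hS.comp ((contDiff_id.sub contDiff_const).div_const v)).add
    (hS.comp ((contDiff_neg.sub contDiff_const).div_const v))

theorem edgeCutoff_nonneg : 0 ≤ edgeCutoff B v t :=
  add_nonneg (Real.smoothTransition.nonneg _) (Real.smoothTransition.nonneg _)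

theorem edgeCutoff_eq_zero (hv : 0 < v) (ht : |t| ≤ B) : edgeCutoff B v t = 0 := by
  obtain ⟨hlow, hup⟩ := abs_le.1 ht
  rw [edgeCutoff,
    Real.smoothTransition.zero_of_nonpos (div_nonpos_of_nonpos_of_nonneg (by linarith) hv.le),
    Real.smoothTransition.zero_of_nonpos (div_nonpos_of_nonpos_of_nonneg (by linarith) hv.le),
    add_zero]

theorem one_le_edgeCutoff (hv : 0 < v) (ht : B + v ≤ |t|) : 1 ≤ edgeCutoff B v t := by
  rcases le_abs.1 ht with h | h
  · have hone := Real.smoothTransition.one_of_one_le ((one_le_div hv).2 (le_sub_iff_add_le'.2 h))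
    exact hone.symm.le.trans (le_add_of_nonneg_right (Real.smoothTransition.nonneg _))
  · have hone := Real.smoothTransition.one_of_one_le ((one_le_div hv).2 (le_sub_iff_add_le'.2 h))
    exact hone.symm.le.trans (le_add_of_nonneg_left (Real.smoothTransition.nonneg _))

theorem abs_edgeCutoff_sub_le (hK : LipschitzWith K Real.smoothTransition) (hv : 0 < v) (s t : ℝ) :
    |edgeCutoff B v s - edgeCutoff B v t| ≤ 2 * K / v * |s - t| := by
  have hdist (x y : ℝ) : |Real.smoothTransition ((x - B) / v) -
      Real.smoothTransition ((y - B) / v)| ≤ K / v * |x - y| := by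
    refine (hK.dist_le_mul _ _).trans_eq ?_
    rw [Real.dist_eq, ← sub_div, sub_sub_sub_cancel_right, abs_div, abs_of_pos hv]
    ring
  have hneg := hdist (-s) (-t)
  rw [neg_sub_neg, abs_sub_comm t] at hneg
  rw [edgeCutoff, edgeCutoff, add_sub_add_comm]
  exact (abs_add_le _ _).trans ((add_le_add (hdist s t) hneg).trans_eq (by ring))

end EdgeCutoff

section TailCutoff

variable {m d : ℕ} {B v : ℝ} {K : ℝ≥0} {X Y : Eucl m}

/-- A smooth function of `x''` vanishing when all its coordinates are at most `B`, and at least `1`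
when one of them is at least `B + v`. -/
def tailCutoff (d : ℕ) (B v : ℝ) (X : Eucl m) : ℝ :=
  ∑ i, edgeCutoff B v ((X - headProj m d X) i)

theorem contDiff_tailCutoff :
    ContDiff ℝ (⊤ : ℕ∞) (tailCutoff d B v : Eucl m → ℝ) :=
  ContDiff.sum fun i _ => contDiff_edgeCutoff.comp
    ((EuclideanSpace.proj i : Eucl m →L[ℝ] ℝ).contDiff.comp
      (contDiff_id.sub (headProj m d).contDiff))

theorem tailCutoff_nonneg : 0 ≤ tailCutoff d B v X :=
  Finset.sum_nonneg fun _ _ => edgeCutoff_nonneg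

theorem tailCutoff_eq_zero (hv : 0 < v) (h : ∀ i, |(X - headProj m d X) i| ≤ B) :
    tailCutoff d B v X = 0 :=
  Finset.sum_eq_zero fun i _ => edgeCutoff_eq_zero hv (h i)

theorem one_le_tailCutoff (hv : 0 < v) {i : Fin m} (h : B + v ≤ |(X - headProj m d X) i|) :
    1 ≤ tailCutoff d B v X :=
  (one_le_edgeCutoff hv h).trans
    (Finset.single_le_sum (f := fun i => edgeCutoff B v ((X - headProj m d X) i))
      (fun _ _ => edgeCutoff_nonneg) (Finset.mem_univ i))

theorem tailCutoff_congr (h : X - headProj m d X = Y - headProj m d Y) :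
    tailCutoff d B v X = tailCutoff d B v Y := by
  rw [tailCutoff, tailCutoff, h]

theorem abs_tailCutoff_sub_le (hK : LipschitzWith K Real.smoothTransition) (hv : 0 < v) :
    |tailCutoff d B v X - tailCutoff d B v Y| ≤ 2 * m * K / v * ‖X - Y‖ := by
  rw [tailCutoff, tailCutoff, ← Finset.sum_sub_distrib]
  calc _ ≤ ∑ _i : Fin m, 2 * K / v * ‖X - Y‖ := (Finset.abs_sum_le_sum_abs _ _).trans <|
        Finset.sum_le_sum fun i _ => (abs_edgeCutoff_sub_le hK hv _ _).trans <| by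
          gcongr
          rw [← PiLp.sub_apply, sub_sub_sub_comm, ← map_sub]
          exact (PiLp.norm_apply_le _ i).trans (norm_sub_headProj_le _)
    _ = 2 * m * K / v * ‖X - Y‖ := by
        rw [Finset.sum_const, Finset.card_univ, Fintype.card_fin, nsmul_eq_mul]
        ring

end TailCutoff

section HeadGauge

instance fact_one_le_natCast {q : ℕ} [NeZero q] : Fact ((1 : ℝ≥0∞) ≤ q) :=
  ⟨by exact_mod_cast NeZero.one_le⟩

variable {m d q : ℕ} [NeZero q] {X Y : Eucl m}

theorem norm_piLp_le_card_mul {ι : Type*} [Fintype ι] {p : ℝ≥0∞} [Fact (1 ≤ p)]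
    {x : PiLp p fun _ : ι => ℝ} {c : ℝ} (h : ∀ i, ‖x i‖ ≤ c) : ‖x‖ ≤ Fintype.card ι * c := by
  classical
  have hsum : x = ∑ i, PiLp.single p i (x i) := by
    ext j
    simp [Pi.single_apply]
  rw [hsum, ← Finset.card_univ, ← nsmul_eq_mul, ← Finset.sum_const]
  exact norm_sum_le_of_le _ fun i _ => (PiLp.norm_single p (fun _ => ℝ) i (x i)).trans_le (h i)

/-- The `ℓ^q` norm of `x'`, whose `q`-th power is a polynomial when `q` is even. -/
def headGauge (m d q : ℕ) [NeZero q] : Seminorm ℝ (Eucl m) :=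
  (normSeminorm ℝ (PiLp q fun _ : Fin m => ℝ)).comp <|
    (WithLp.linearEquiv q ℝ (Fin m → ℝ)).symm.toLinearMap ∘ₗ
      (WithLp.linearEquiv 2 ℝ (Fin m → ℝ)).toLinearMap ∘ₗ (headProj m d).toLinearMap

theorem headGauge_apply (X : Eucl m) :
    headGauge m d q X = ‖WithLp.toLp q (WithLp.ofLp (headProj m d X))‖ := rfl

theorem abs_headProj_apply_le_headGauge (i : Fin m) : |headProj m d X i| ≤ headGauge m d q X :=
  PiLp.norm_apply_le (WithLp.toLp q (WithLp.ofLp (headProj m d X))) i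

theorem headGauge_le : headGauge m d q X ≤ m * ‖headProj m d X‖ := by
  simpa [headGauge_apply] using norm_piLp_le_card_mul
    (x := WithLp.toLp q (WithLp.ofLp (headProj m d X)))
    fun i => PiLp.norm_apply_le (headProj m d X) i

theorem norm_headProj_le_headGauge : ‖headProj m d X‖ ≤ m * headGauge m d q X := by
  simpa using norm_piLp_le_card_mul (x := headProj m d X)
    fun i => abs_headProj_apply_le_headGauge (q := q) i

theorem headGauge_congr (h : headProj m d X = headProj m d Y) :
    headGauge m d q X = headGauge m d q Y := by
  rw [headGauge_apply, headGauge_apply, h]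

theorem headGauge_pow (X : Eucl m) :
    headGauge m d q X ^ q = ∑ i, |headProj m d X i| ^ q := by
  rw [headGauge_apply, PiLp.norm_eq_of_nat q rfl, ← Real.rpow_natCast,
    ← Real.rpow_mul (by positivity), one_div_mul_cancel (NeZero.ne _), Real.rpow_one]
  simp only [Real.norm_eq_abs]

theorem contDiff_headGauge_pow (hqe : Even q) :
    ContDiff ℝ (⊤ : ℕ∞) fun X => headGauge m d q X ^ q := by
  simp only [headGauge_pow, hqe.pow_abs]
  exact ContDiff.sum fun i _ =>
    ((EuclideanSpace.proj i : Eucl m →L[ℝ] ℝ).contDiff.comp (headProj m d).contDiff).pow q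

theorem headGauge_pow_le {a : ℝ} (h : ∀ i, |headProj m d X i| ≤ a) :
    headGauge m d q X ^ q ≤ m * a ^ q := by
  rw [headGauge_pow]
  calc _ ≤ ∑ _i : Fin m, a ^ q := by
        gcongr with i
        exact h i
    _ = m * a ^ q := by simp

end HeadGauge

end Existence

section BlockFactor

variable {m d q : ℕ} [NeZero q] {L B v a δ : ℝ} {K : ℝ≥0} {X Y : Eucl m}

/-- A smooth level function, vanishing where `x'` and `x''` are both small and at least `1` where
one of them is large. -/
def blockLevel (d q : ℕ) [NeZero q] (L B v a : ℝ) (X : Eucl m) : ℝ :=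
  Real.smoothTransition (((headGauge m d q X / L) ^ q - a) / (1 - a)) + tailCutoff d B v X

/-- The smooth scaling factor of a block, increasing from `δ` to `1` with `blockLevel`. -/
def blockFactor (d q : ℕ) [NeZero q] (L B v a δ : ℝ) (X : Eucl m) : ℝ :=
  δ + (1 - δ) * Real.smoothTransition (blockLevel d q L B v a X)

theorem contDiff_blockFactor (hqe : Even q) :
    ContDiff ℝ (⊤ : ℕ∞) (blockFactor d q L B v a δ : Eucl m → ℝ) := by
  have hgauge : ContDiff ℝ (⊤ : ℕ∞) fun X : Eucl m => (headGauge m d q X / L) ^ q := by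
    simp only [div_pow]
    exact (contDiff_headGauge_pow hqe).div_const _
  have hS := Real.smoothTransition.contDiff (n := (⊤ : ℕ∞))
  exact contDiff_const.add (contDiff_const.mul (hS.comp
    ((hS.comp ((hgauge.sub contDiff_const).div_const _)).add contDiff_tailCutoff)))

theorem le_blockFactor (hδ1 : δ ≤ 1) : δ ≤ blockFactor d q L B v a δ X :=
  le_add_of_nonneg_right (mul_nonneg (sub_nonneg.2 hδ1) (Real.smoothTransition.nonneg _))

theorem blockFactor_le_one (hδ1 : δ ≤ 1) : blockFactor d q L B v a δ X ≤ 1 := by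
  have hle := mul_le_of_le_one_right (sub_nonneg.2 hδ1)
    (Real.smoothTransition.le_one (blockLevel d q L B v a X))
  rw [blockFactor]
  linarith

theorem blockFactor_eq_one (h : 1 ≤ blockLevel d q L B v a X) :
    blockFactor d q L B v a δ X = 1 := by
  rw [blockFactor, Real.smoothTransition.one_of_one_le h]
  ring

theorem blockFactor_eq (h : blockLevel d q L B v a X = 0) :
    blockFactor d q L B v a δ X = δ := by
  rw [blockFactor, h, Real.smoothTransition.zero, mul_zero, add_zero]

theorem blockFactor_eq_one_of_le_headGauge (hL : 0 < L) (ha : a < 1)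
    (h : L ≤ headGauge m d q X) : blockFactor d q L B v a δ X = 1 := by
  have hpow : 1 ≤ (headGauge m d q X / L) ^ q := one_le_pow₀ ((one_le_div hL).2 h)
  refine blockFactor_eq_one (le_add_of_le_of_nonneg ?_ tailCutoff_nonneg)
  rw [Real.smoothTransition.one_of_one_le]
  exact (one_le_div (sub_pos.2 ha)).2 (sub_le_sub_right hpow a)

theorem blockFactor_eq_one_of_notMem_rect (hL : 0 < L) (hv : 0 < v) (ha : a < 1)
    (h : X ∉ rect m d L (B + v)) : blockFactor d q L B v a δ X = 1 := by
  simp only [rect, mem_ofPred_eq, not_forall, not_and_or, not_lt] at h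
  obtain ⟨i, ⟨hi, hLi⟩ | ⟨hi, hBi⟩⟩ := h
  · refine blockFactor_eq_one_of_le_headGauge hL ha (hLi.trans ?_)
    simpa [hi] using abs_headProj_apply_le_headGauge (q := q) (X := X) (d := d) i
  · exact blockFactor_eq_one (le_add_of_nonneg_of_le (Real.smoothTransition.nonneg _)
      (one_le_tailCutoff hv (i := i) (by simpa [hi.not_gt] using hBi)))

theorem blockFactor_eq_of_mem_rect {ρ : ℝ} (hρ : 0 ≤ ρ) (hL : 0 < L) (hB : 0 ≤ B) (hv : 0 < v)
    (ha : m * ρ ^ q < 1) (h : X ∈ rect m d (ρ * L) B) :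
    blockFactor d q L B v (m * ρ ^ q) δ X = δ := by
  have hhead (i : Fin m) : |headProj m d X i| ≤ ρ * L := by
    rw [headProj_apply]
    split_ifs with hi
    exacts [((h i).1 hi).le, by simpa using mul_nonneg hρ hL.le]
  have htail (i : Fin m) : |(X - headProj m d X) i| ≤ B := by
    rw [PiLp.sub_apply, headProj_apply]
    split_ifs with hi
    exacts [by simpa using hB, by simpa using ((h i).2 (not_lt.1 hi)).le]
  have hgauge : (headGauge m d q X / L) ^ q ≤ m * ρ ^ q := by
    rw [div_pow, div_le_iff₀ (pow_pos hL q), mul_assoc, ← mul_pow]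
    exact headGauge_pow_le hhead
  refine blockFactor_eq ?_
  rw [blockLevel, tailCutoff_eq_zero hv htail, Real.smoothTransition.zero_of_nonpos, add_zero]
  exact div_nonpos_of_nonpos_of_nonneg (sub_nonpos.2 hgauge) (sub_nonneg.2 ha.le)

theorem blockFactor_mono (hL : 0 < L) (ha : a < 1) (hδ1 : δ ≤ 1)
    (hXY : headGauge m d q X ≤ headGauge m d q Y)
    (htail : X - headProj m d X = Y - headProj m d Y) :
    blockFactor d q L B v a δ X ≤ blockFactor d q L B v a δ Y := by
  have : 0 ≤ 1 - a := (sub_pos.2 ha).le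
  have hδ : 0 ≤ 1 - δ := sub_nonneg.2 hδ1
  have : 0 ≤ headGauge m d q X := apply_nonneg _ X
  rw [blockFactor, blockFactor, blockLevel, blockLevel, tailCutoff_congr htail]
  refine add_le_add_right (mul_le_mul_of_nonneg_left (Real.smoothTransition.monotone
    (add_le_add_left (Real.smoothTransition.monotone ?_) _)) hδ) δ
  gcongr

theorem abs_blockFactor_sub_le (hK : LipschitzWith K Real.smoothTransition) (hδ0 : 0 ≤ δ)
    (hδ1 : δ ≤ 1) (X Y : Eucl m) :
    |blockFactor d q L B v a δ X - blockFactor d q L B v a δ Y| ≤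
      K * |blockLevel d q L B v a X - blockLevel d q L B v a Y| := by
  rw [blockFactor, blockFactor, add_sub_add_left_eq_sub, ← mul_sub, abs_mul,
    abs_of_nonneg (sub_nonneg.2 hδ1)]
  exact (mul_le_of_le_one_left (abs_nonneg _) (sub_le_self 1 hδ0)).trans (hK.dist_le_mul _ _)

theorem abs_blockFactor_sub_le_of_headProj_eq (hK : LipschitzWith K Real.smoothTransition)
    (hδ0 : 0 ≤ δ) (hδ1 : δ ≤ 1) (hv : 0 < v) (h : headProj m d X = headProj m d Y) :
    |blockFactor d q L B v a δ X - blockFactor d q L B v a δ Y| ≤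
      K * (2 * m * K / v * ‖X - Y‖) := by
  refine (abs_blockFactor_sub_le hK hδ0 hδ1 X Y).trans ?_
  rw [blockLevel, blockLevel, headGauge_congr h, add_sub_add_left_eq_sub]
  gcongr
  exact abs_tailCutoff_sub_le hK hv

theorem headGauge_add_smul_headProj (X : Eucl m) (t : ℝ) :
    headGauge m d q (X + t • headProj m d X) = |1 + t| * headGauge m d q X := by
  rw [← Real.norm_eq_abs, ← map_smul_eq_mul]
  refine headGauge_congr ?_
  rw [map_add, map_smul, map_smul, headProj_headProj]
  module

theorem abs_one_add_pow_sub_one_le {t : ℝ} (ht : |t| ≤ 1) (q : ℕ) :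
    |(1 + t) ^ q - 1| ≤ q * 2 ^ (q - 1) * |t| := by
  have hmax : max |1 + t| |1| ≤ 2 :=
    max_le ((abs_add_le 1 t).trans (by rw [abs_one]; linarith)) (by simp)
  calc |(1 + t) ^ q - 1| ≤ |t| * q * max |1 + t| |1| ^ (q - 1) := by
        simpa using abs_pow_sub_pow_le (1 + t) 1 q
    _ ≤ |t| * q * 2 ^ (q - 1) := by gcongr
    _ = q * 2 ^ (q - 1) * |t| := by ring

theorem abs_blockFactor_add_smul_headProj_sub_le (hK : LipschitzWith K Real.smoothTransition)
    (hqe : Even q) (hL : 0 < L) (ha : a < 1) (hδ0 : 0 ≤ δ) (hδ1 : δ ≤ 1)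
    (hX : headGauge m d q X ≤ L) {t : ℝ} (ht : |t| ≤ 1) :
    |blockFactor d q L B v a δ (X + t • headProj m d X) - blockFactor d q L B v a δ X| ≤
      K * (K * (q * 2 ^ (q - 1) / (1 - a))) * |t| := by
  have htail : tailCutoff d B v (X + t • headProj m d X) = tailCutoff d B v X :=
    tailCutoff_congr (by rw [map_add, map_smul, headProj_headProj]; abel)
  have hgauge : (headGauge m d q X / L) ^ q ≤ 1 :=
    pow_le_one₀ (div_nonneg (apply_nonneg _ X) hL.le) ((div_le_one hL).2 hX)
  have hdiff : |(headGauge m d q (X + t • headProj m d X) / L) ^ q - (headGauge m d q X / L) ^ q|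
      ≤ q * 2 ^ (q - 1) * |t| := by
    rw [headGauge_add_smul_headProj, mul_div_assoc, mul_pow, hqe.pow_abs, ← sub_one_mul, abs_mul,
      abs_of_nonneg (hqe.pow_nonneg (_ / L))]
    exact (mul_le_of_le_one_right (abs_nonneg _) hgauge).trans (abs_one_add_pow_sub_one_le ht q)
  refine (abs_blockFactor_sub_le hK hδ0 hδ1 _ _).trans ?_
  rw [blockLevel, blockLevel, htail, add_sub_add_right_eq_sub, mul_assoc]
  refine mul_le_mul_of_nonneg_left ((hK.dist_le_mul _ _).trans ?_) K.2
  rw [Real.dist_eq, ← sub_div, sub_sub_sub_cancel_right, abs_div, abs_of_pos (sub_pos.2 ha),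
    mul_assoc, div_mul_eq_mul_div]
  have : 0 ≤ 1 - a := (sub_pos.2 ha).le
  gcongr

theorem fderiv_blockFactor_headProj_le (hK : LipschitzWith K Real.smoothTransition)
    (hqe : Even q) (hL : 0 < L) (ha : a < 1) (hδ0 : 0 ≤ δ) (hδ1 : δ ≤ 1) (X : Eucl m) :
    fderiv ℝ (blockFactor d q L B v a δ) X (headProj m d X) ≤
      K * (K * (q * 2 ^ (q - 1) / (1 - a))) := by
  have hA : 0 ≤ K * (K * (q * 2 ^ (q - 1) / (1 - a))) := by
    have : 0 ≤ 1 - a := (sub_pos.2 ha).le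
    positivity
  rcases le_total L (headGauge m d q X) with hX | hX
  · have hmax : IsLocalMax (blockFactor d q L B v a δ) X := Filter.Eventually.of_forall fun Y => by
      rw [blockFactor_eq_one_of_le_headGauge hL ha hX]
      exact blockFactor_le_one hδ1
    rw [hmax.fderiv_eq_zero]
    exact hA
  · have hline := (((contDiff_blockFactor (L := L) (B := B) (v := v) (a := a) (δ := δ) (d := d)
      hqe).differentiable (by simp)).differentiableAt (x := X)).hasFDerivAt.hasLineDerivAt
        (headProj m d X)
    refine (le_abs_self _).trans (HasDerivAt.le_of_lip' hline hA ?_)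
    filter_upwards [Metric.closedBall_mem_nhds (0 : ℝ) one_pos] with t ht
    simpa using abs_blockFactor_add_smul_headProj_sub_le hK hqe hL ha hδ0 hδ1 hX
      (mem_closedBall_zero_iff.1 ht)

/-- The scaling factor of a block as a shrinking profile. -/
def blockProfile (hK : LipschitzWith K Real.smoothTransition) (hqe : Even q) {r : ℝ} (hr : 0 < r)
    (hL : 0 < L) (ha : a < 1) (hδ0 : 0 < δ) (hδ1 : δ < 1) :
    ShrinkingProfile m d (K * (K * (q * 2 ^ (q - 1) / (1 - a).toNNReal)))
      (2 * m * K ^ 2 / r.toNNReal) δ where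
  toFun := blockFactor d q L B (r * L) a δ
  gauge := headGauge m d q
  radius := L
  contDiff := contDiff_blockFactor hqe
  pos := hδ0
  le_toFun _ := le_blockFactor hδ1.le
  toFun_le_one _ := blockFactor_le_one hδ1.le
  gauge_le _ := headGauge_le
  norm_headProj_le _ := norm_headProj_le_headGauge
  mono _ _ := blockFactor_mono hL ha hδ1.le
  eq_one_of_radius_le _ := blockFactor_eq_one_of_le_headGauge hL ha
  abs_sub_mul_radius_le X Y h := by
    refine (mul_le_mul_of_nonneg_right (abs_blockFactor_sub_le_of_headProj_eq hK hδ0.le hδ1.le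
      (mul_pos hr hL) h) hL.le).trans_eq ?_
    push_cast
    rw [Real.coe_toNNReal r hr.le]
    field_simp
  fderiv_headProj_le X := by
    push_cast
    rw [Real.coe_toNNReal _ (sub_pos.2 ha).le]
    exact fderiv_blockFactor_headProj_le hK hqe hL ha hδ0.le hδ1.le X

theorem exists_pos_lt_one_forall_mul_le {t : ℝ} (ht : 0 < t) (K : ℝ) :
    ∃ δ, 0 < δ ∧ δ < 1 ∧ ∀ k ≤ K, δ * k ≤ t := by
  have hK : 0 < |K| + 1 := by positivity
  have hδ : 0 < min 2⁻¹ (t / (|K| + 1)) := by positivity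
  refine ⟨_, hδ, (min_le_left _ _).trans_lt (by norm_num), fun k hk => ?_⟩
  calc _ ≤ t / (|K| + 1) * (|K| + 1) :=
        (mul_le_mul_of_nonneg_left (hk.trans ((le_abs_self K).trans (lt_add_one _).le)) hδ.le).trans
          (mul_le_mul_of_nonneg_right (min_le_right _ _) hK.le)
    _ = t := div_mul_cancel₀ t hK.ne'

theorem exists_shrinkingProfile (m d : ℕ) {ρ r : ℝ} (hρ0 : 0 ≤ ρ) (hρ1 : ρ < 1) (hr : 0 < r) :
    ∃ A Λ : ℝ≥0, ∀ {L B t : ℝ}, 0 < L → 0 ≤ B → 0 < t → ∀ k₀ : ℝ,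
      ∃ (δ : ℝ) (f : ShrinkingProfile m d A Λ δ), (∀ k ≤ k₀, δ * k ≤ t) ∧
        (∀ X ∉ rect m d L (B + r * L), f X = 1) ∧ ∀ X ∈ rect m d (ρ * L) B, f X = δ := by
  obtain ⟨K, hK⟩ := exists_lipschitzWith_smoothTransition
  obtain ⟨k, hk⟩ := exists_pow_lt_of_lt_one (y := ρ) (x := 1 / ((m : ℝ) + 1)) (by positivity) hρ1
  have ha : m * ρ ^ (2 * (k + 1)) < 1 := by
    refine (lt_div_iff₀' (by positivity)).1 hk |>.trans_le' ?_
    gcongr ?_ * ?_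
    · exact (lt_add_one _).le
    · exact pow_le_pow_of_le_one hρ0 hρ1.le (by lia)
  set q := 2 * (k + 1)
  refine ⟨K * (K * (q * 2 ^ (q - 1) / (1 - m * ρ ^ q).toNNReal)), 2 * m * K ^ 2 / r.toNNReal,
    fun {L B t} hL hB ht k₀ => ?_⟩
  obtain ⟨δ, hδ0, hδ1, hδ⟩ := exists_pos_lt_one_forall_mul_le ht k₀
  have hv : 0 < r * L := mul_pos hr hL
  exact ⟨δ, blockProfile (q := q) (B := B) hK (even_two_mul _) hr hL ha hδ0 hδ1, hδ,
    fun X => blockFactor_eq_one_of_notMem_rect hL hv ha,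
    fun X => blockFactor_eq_of_mem_rect hρ0 hL hB hv ha⟩

end BlockFactor

section Exponents

theorem exists_kernelExponents {m d : ℕ} (hdm : d ≤ m) {κ : ℝ} (hκ0 : 0 ≤ κ)
    (hκd : κ < d) : ∃ n, Nonempty (KernelExponents m d n (m + κ)) := by
  obtain ⟨n, hn⟩ := exists_nat_ge (6 / ((d : ℝ) - κ))
  rw [div_le_iff₀ (sub_pos.2 hκd)] at hn
  have hdm' : (d : ℝ) ≤ m := by exact_mod_cast hdm
  have hm : (0 : ℝ) < m := by linarith
  -- the deficit of the tail exponents, small enough for `n * β` to stay below `2 * n * d - 3`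
  set ε : ℝ := (d - κ) / (2 * m) with hε
  have hε0 : 0 < ε := div_pos (sub_pos.2 hκd) (by positivity)
  have hε1 : ε ≤ 1 := (div_le_one (by positivity)).2 (by linarith)
  have hεm : ε * m = (d - κ) / 2 := by rw [hε]; field_simp
  have hεd : 0 ≤ ε * d := by positivity
  refine ⟨n, ⟨{
    β := d + κ + ε * (m - d)
    γ := fun i => if (i : ℕ) < d then 0 else 1 - ε
    β_pos := ?_
    mul_β_le := ?_
    γ_nonneg := fun i => by split_ifs <;> linarith
    γ_lt_one := fun i => by split_ifs <;> linarith
    γ_eq_zero := fun i hi => if_pos hi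
    add_sum := ?_ }⟩⟩
  · linarith [mul_nonneg hε0.le (sub_nonneg.2 hdm')]
  · push_cast
    nlinarith [mul_nonneg (Nat.cast_nonneg (α := ℝ) n) hεd]
  · have hcard : ({i : Fin m | ¬ (i : ℕ) < d} : Finset (Fin m)).card = m - d := by
      rw [Finset.filter_not, ← Finset.compl_eq_univ_sdiff, Finset.card_compl,
        Fin.card_filter_val_lt, Fintype.card_fin, min_eq_right hdm]
    rw [Finset.sum_ite, Finset.sum_const_zero, Finset.sum_const, hcard, nsmul_eq_mul,
      Nat.cast_sub hdm]
    ring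

end Exponents

section Rect

variable (m d : ℕ) (a b : ℝ)

theorem rect_eq_preimage_pi : rect m d a b = EuclideanSpace.equiv (Fin m) ℝ ⁻¹'
    univ.pi fun i : Fin m => ball 0 (if (i : ℕ) < d then a else b) := by
  ext X
  simp only [rect, mem_ofPred_eq, mem_preimage, mem_univ_pi, mem_ball_zero_iff, Real.norm_eq_abs]
  refine forall_congr' fun i => ?_
  by_cases hi : (i : ℕ) < d
  · simp [hi]
  · simp [hi, not_lt.1 hi]

theorem isOpen_rect : IsOpen (rect m d a b) := by
  rw [rect_eq_preimage_pi]
  exact (isOpen_set_pi finite_univ fun _ _ => isOpen_ball).preimage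
    (EuclideanSpace.equiv (Fin m) ℝ).continuous

theorem convex_rect : Convex ℝ (rect m d a b) := by
  rw [rect_eq_preimage_pi]
  exact (convex_pi fun _ _ => convex_ball _ _).linear_preimage
    (EuclideanSpace.equiv (Fin m) ℝ).toLinearEquiv.toLinearMap

theorem isBounded_rect : Bornology.IsBounded (rect m d a b) := by
  rw [rect_eq_preimage_pi]
  exact (EuclideanSpace.equiv (Fin m) ℝ).antilipschitz.isBounded_preimage
    (Bornology.IsBounded.pi fun _ => isBounded_ball)

variable {a b}

theorem volume_rect_ne_zero (ha : 0 < a) (hb : 0 < b) : volume (rect m d a b) ≠ 0 :=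
  ((isOpen_rect m d a b).measure_pos volume ⟨0, fun i => by simp [ha, hb]⟩).ne'

theorem exists_isThickAlong_rect_self (ha : 0 < a) (hb : 0 < b) :
    ∃ M : ℝ≥0, IsThickAlong volume m M (rect m d a b) (rect m d a b) := by
  simpa only [finrank_euclideanSpace_fin] using exists_isThickAlong_self_of_convex
    (convex_rect m d a b) (isBounded_rect m d a b) (volume_rect_ne_zero m d ha hb)

end Rect

section ShrinkingMap

theorem rpow_one_div_le {p : ℝ} (hp : 1 ≤ p) {C₀ C τ e : ℝ} (hC : 1 ≤ C) (hC₀ : C₀ ≤ C)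
    (hτ : 0 < τ) {x y z : ℝ≥0∞}
    (h : x ≤ ENNReal.ofReal C₀ * (y + ENNReal.ofReal (τ ^ e) * z)) :
    x ^ (1 / p) ≤ ENNReal.ofReal C * y ^ (1 / p) +
      ENNReal.ofReal (C * τ ^ (e / p)) * z ^ (1 / p) := by
  have hp0 : 0 ≤ 1 / p := by positivity
  have hp1 : 1 / p ≤ 1 := (div_le_one (by positivity)).2 hp
  have hroot : ENNReal.ofReal C ^ (1 / p) ≤ ENNReal.ofReal C :=
    (ENNReal.rpow_le_rpow_of_exponent_le (ENNReal.one_le_ofReal.2 hC) hp1).trans_eq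
      (ENNReal.rpow_one _)
  have hτroot : ENNReal.ofReal (τ ^ e) ^ (1 / p) = ENNReal.ofReal (τ ^ (e / p)) := by
    rw [ENNReal.ofReal_rpow_of_nonneg (by positivity) hp0, ← Real.rpow_mul hτ.le, mul_one_div]
  calc x ^ (1 / p) ≤ (ENNReal.ofReal C * (y + ENNReal.ofReal (τ ^ e) * z)) ^ (1 / p) := by
        gcongr
        exact h.trans (by gcongr)
    _ ≤ ENNReal.ofReal C * (y ^ (1 / p) + (ENNReal.ofReal (τ ^ e) * z) ^ (1 / p)) := by
        rw [ENNReal.mul_rpow_of_nonneg _ _ hp0]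
        gcongr
        exact ENNReal.rpow_add_le_add_rpow _ _ hp0 hp1
    _ = _ := by
        rw [ENNReal.mul_rpow_of_nonneg _ _ hp0, hτroot, ENNReal.ofReal_mul (by positivity), mul_add,
          mul_assoc]

namespace ShrinkingProfile

variable {m d n : ℕ} {A Λ : ℝ≥0} {δ : ℝ} (f : ShrinkingProfile m d A Λ δ)

theorem one_le_inv_pow (X : Eucl m) : 1 ≤ (f X ^ n)⁻¹ :=
  (one_le_inv₀ (pow_pos (f.toFun_pos X) n)).2 (pow_le_one₀ (f.toFun_pos X).le (f.toFun_le_one X))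

theorem map_homeomorph_symm (x : Eucl m) : f.map n ((f.homeomorph n).symm x) = x :=
  (f.homeomorph n).apply_symm_apply x

theorem homeomorph_symm_apply_of_lt (x : Eucl m) {i : Fin m} (hi : (i : ℕ) < d) :
    (f.homeomorph n).symm x i = (f ((f.homeomorph n).symm x) ^ n)⁻¹ * x i := by
  rw [eq_inv_mul_iff_mul_eq₀ (pow_pos (f.toFun_pos _) n).ne']
  nth_rw 3 [← f.map_homeomorph_symm (n := n) x]
  exact (axialScaling_apply_of_lt (fun X => f X ^ n) _ hi).symm

theorem homeomorph_symm_apply_of_le (x : Eucl m) {i : Fin m} (hi : d ≤ (i : ℕ)) :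
    (f.homeomorph n).symm x i = x i := by
  nth_rw 2 [← f.map_homeomorph_symm (n := n) x]
  exact (axialScaling_apply_of_le _ _ hi).symm

theorem homeomorph_symm_eq_self {x : Eucl m} (hx : f x = 1) : (f.homeomorph n).symm x = x := by
  rw [Homeomorph.symm_apply_eq, homeomorph_apply, map, axialScaling, hx]
  simp

theorem rect_subset_homeomorph_symm_image {ρ L B τ : ℝ} (hn : n ≠ 0) (hL : 0 < L) (hρ0 : 0 ≤ ρ)
    (hρ1 : ρ < 1) (hf : ∀ X ∈ rect m d (ρ * L) B, f X = δ) (hτ : 0 < τ)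
    (hδτ : δ * m ≤ τ) :
    rect m d (ρ * L) B ⊆ (f.homeomorph n).symm '' cylinder m d (τ * L) B := by
  intro X hX
  refine ⟨f.map n X, ⟨?_, fun i hi => ?_⟩, (f.homeomorph n).symm_apply_apply X⟩
  · have hhead : ‖headProj m d X‖ ≤ m * (ρ * L) := by
      simpa using norm_piLp_le_card_mul (x := headProj m d X) fun i => by
        rw [headProj_apply]
        split_ifs with hi
        exacts [((hX i).1 hi).le, by simpa using mul_nonneg hρ0 hL.le]
    calc headNorm m d (f.map n X) = δ ^ n * ‖headProj m d X‖ := by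
          rw [headNorm_eq_norm_headProj, map, headProj_axialScaling, hf X hX, norm_smul,
            Real.norm_of_nonneg (pow_pos f.pos n).le]
      _ ≤ δ * (m * (ρ * L)) :=
          mul_le_mul (pow_le_of_le_one f.pos.le ((f.le_toFun X).trans (f.toFun_le_one X)) hn) hhead
            (norm_nonneg _) f.pos.le
      _ ≤ τ * (ρ * L) := by
          rw [← mul_assoc]
          exact mul_le_mul_of_nonneg_right hδτ (mul_nonneg hρ0 hL.le)
      _ < τ * L := mul_lt_mul_of_pos_left (mul_lt_of_lt_one_left hL hρ1) hτ
  · rw [map, axialScaling_apply_of_le _ _ hi]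
    exact (hX i).2 hi

variable {F : Type*} [NormedAddCommGroup F] {p τ : ℝ} {Q ω : Set (Eucl m)}

theorem eLpNorm_comp_preimage_le (hdm : d ≤ m) (hnd : 2 ≤ n * d) (hp : 1 ≤ p) (hτ : 0 < τ)
    (hδ : δ ≤ τ ^ (d : ℝ)) (hQ : MeasurableSet Q) (hω : MeasurableSet ω) (hQω : Q ⊆ ω)
    (hfQ : ∀ X ∈ Q, f X = δ) {C : ℝ} (hC : 1 + n * A ≤ C) (u : Eucl m → F) :
    eLpNorm (fun x => u ((f.homeomorph n).symm x)) (ENNReal.ofReal p)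
        (volume.restrict ((f.homeomorph n).symm ⁻¹' ω)) ≤
      ENNReal.ofReal C * eLpNorm u (ENNReal.ofReal p) (volume.restrict (ω \ Q)) +
        ENNReal.ofReal (C * τ ^ ((d : ℝ) / p)) *
          eLpNorm u (ENNReal.ofReal p) (volume.restrict ω) := by
  have hp0 : ENNReal.ofReal p ≠ 0 := (ENNReal.ofReal_pos.2 (by linarith)).ne'
  simp only [eLpNorm_eq_lintegral_rpow_enorm_toReal hp0 ENNReal.ofReal_ne_top,
    ENNReal.toReal_ofReal (zero_le_one.trans hp)]
  have hC₀ : (1 : ℝ) ≤ 1 + n * A := le_add_of_nonneg_right (by positivity)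
  refine rpow_one_div_le hp (hC₀.trans hC) hC hτ
    ((lintegral_comp_preimage_le f hdm hnd hQ hω hQω hfQ fun X => ‖u X‖ₑ ^ p).trans ?_)
  rw [← ENNReal.ofReal_coe_nnreal]
  push_cast
  gcongr
  exact ENNReal.ofReal_le_ofReal hδ

theorem exists_gagliardoSeminorm_preimage_le (hdm : d ≤ m) {s : ℝ} (hp : 1 ≤ p)
    (E : KernelExponents m d n (m + s * p)) (A Λ : ℝ≥0) {c' : ℝ} (hc' : 0 < c') :
    ∃ C₀ : ℝ, ∀ (C : ℝ) (MQ : ℝ≥0) (δ τ : ℝ) (f : ShrinkingProfile m d A Λ δ), C₀ ≤ C → 0 < τ →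
      δ ≤ τ ^ (d - s * p) → δ * MQ ≤ τ ^ (d - s * p) →
      ∀ Q ω : Set (Eucl m), MeasurableSet Q → MeasurableSet ω → Q ⊆ ω →
      (∀ X ∈ Q, f X = δ) → IsThickAlong volume m MQ Q Q →
      (∀ z ∈ ω \ Q, ∀ t : ℝ, 0 < t → 2 * ENNReal.ofReal t ≤ ediam ω →
        ENNReal.ofReal (c' * t ^ m) ≤ volume (ball z t ∩ (ω \ Q))) →
      ∀ u : Eucl m → F, StronglyMeasurable u →
        gagliardoSeminorm m s p ((f.homeomorph n).symm ⁻¹' ω)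
            (fun x => u ((f.homeomorph n).symm x)) ≤
          ENNReal.ofReal C * gagliardoSeminorm m s p (ω \ Q) u +
            ENNReal.ofReal (C * τ ^ ((d - s * p) / p)) * gagliardoSeminorm m s p ω u := by
  obtain ⟨K, hK⟩ := exists_gagliardoPow_preimage_le (F := F) hdm hp E A Λ (2 ^ m / c').toNNReal
  refine ⟨max 1 K, fun C MQ δ τ f hC hτ hδ hδMQ Q ω hQ hω hQω hfQ hthickQ hthick u hu => ?_⟩
  refine rpow_one_div_le hp ((le_max_left _ _).trans hC) ((le_max_right _ _).trans hC) hτ ?_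
  rw [ENNReal.ofReal_coe_nnreal]
  refine hK MQ _ δ f (Real.toNNReal_le_toNNReal hδ) ?_ Q ω hQ hω hQω hfQ
    (isThickAlong_of_ball_measure_ge hc' sdiff_subset hthick) hthickQ u hu
  rw [← Real.toNNReal_coe (r := MQ), ← Real.toNNReal_mul f.pos.le]
  exact Real.toNNReal_le_toNNReal hδMQ

end ShrinkingProfile

end ShrinkingMap

end ShrinkingBlock

open ShrinkingBlock

theorem shrinking_block_fractional_general {F : Type*} [NormedAddCommGroup F]
    (m : ℕ) (s p : ℝ) (hs0 : 0 ≤ s) (hp : 1 ≤ p) (d : ℕ) (hdm : d ≤ m) (hdsp : s * p < d)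
    (rlow rup : ℝ) (hrl0 : 0 < rlow) (hrl1 : rlow < 1) (hru0 : 0 < rup) (hru1 : rup < 1)
    (c' : ℝ) (hc' : 0 < c') :
    ∃ C : ℝ, 0 < C ∧
      ∀ (η μ : ℝ), 0 < η → 0 < μ → μ / rup < 1 →
        ∀ τ : ℝ, 0 < τ →
          ∃ (Φ : Eucl m → Eucl m) (lam : Eucl m → ℝ),
            ContDiff ℝ (⊤ : ℕ∞) Φ ∧ Function.Injective Φ ∧
            (∀ x, 1 ≤ lam x) ∧
            (∀ x, ∀ i : Fin m, ((i : ℕ) < d → Φ x i = lam x * x i) ∧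
              (d ≤ (i : ℕ) → Φ x i = x i)) ∧
            (∀ x, x ∉ rect m d (μ * η) ((1 - μ) * η) → Φ x = x) ∧
            rect m d (rlow * μ * η) ((1 - μ / rup) * η)
              ⊆ Φ '' cylinder m d (τ * μ * η) ((1 - μ / rup) * η) ∧
            ∀ ω : Set (Eucl m), MeasurableSet ω →
              rect m d (rlow * μ * η) ((1 - μ / rup) * η) ⊆ ω →
              (∀ z ∈ ω \ rect m d (rlow * μ * η) ((1 - μ / rup) * η), ∀ t : ℝ, 0 < t →
                2 * ENNReal.ofReal t ≤ ediam ω →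
                ENNReal.ofReal (c' * t ^ m) ≤
                  volume (ball z t ∩ (ω \ rect m d (rlow * μ * η) ((1 - μ / rup) * η)))) →
              ∀ u : Eucl m → F, StronglyMeasurable u →
                gagliardoSeminorm m s p (Φ ⁻¹' ω) (fun x => u (Φ x))
                  ≤ ENNReal.ofReal C *
                      gagliardoSeminorm m s p (ω \ rect m d (rlow * μ * η) ((1 - μ / rup) * η)) u
                    + ENNReal.ofReal (C * τ ^ ((d - s * p) / p)) * gagliardoSeminorm m s p ω u ∧
                eLpNorm (fun x => u (Φ x)) (ENNReal.ofReal p) (volume.restrict (Φ ⁻¹' ω))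
                  ≤ ENNReal.ofReal C *
                      eLpNorm u (ENNReal.ofReal p)
                        (volume.restrict (ω \ rect m d (rlow * μ * η) ((1 - μ / rup) * η)))
                    + ENNReal.ofReal (C * τ ^ ((d : ℝ) / p)) *
                        eLpNorm u (ENNReal.ofReal p) (volume.restrict ω) := by
  obtain ⟨n, ⟨E⟩⟩ := exists_kernelExponents hdm (by positivity) hdsp
  obtain ⟨A, Λ, hprofile⟩ := exists_shrinkingProfile m d hrl0.le hrl1
    (sub_pos.2 ((one_lt_div hru0).2 hru1))
  obtain ⟨C₀, hC₀⟩ :=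
    ShrinkingProfile.exists_gagliardoSeminorm_preimage_le (F := F) hdm hp E A Λ hc'
  refine ⟨max (1 + n * A) C₀, lt_max_of_lt_left (by positivity), fun η μ hη hμ hμr τ hτ => ?_⟩
  simp only [mul_assoc _ μ η]
  have hL : 0 < μ * η := mul_pos hμ hη
  have hB : 0 < (1 - μ / rup) * η := mul_pos (sub_pos.2 hμr) hη
  have hQ := (isOpen_rect m d (rlow * (μ * η)) ((1 - μ / rup) * η)).measurableSet
  obtain ⟨MQ, hMQ⟩ := exists_isThickAlong_rect_self m d (mul_pos hrl0 hL) hB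
  have ht : 0 < min (τ ^ (d - s * p)) (min (τ ^ (d : ℝ)) τ) := by positivity
  obtain ⟨δ, f, hδ, hout, hin⟩ := hprofile hL hB.le ht (max 1 (max (MQ : ℝ) m))
  simp only [le_min_iff, le_max_iff] at hδ
  rw [show (1 - μ / rup) * η + (1 / rup - 1) * (μ * η) = (1 - μ) * η by ring] at hout
  have hδ_one := hδ 1 (by simp)
  rw [mul_one] at hδ_one
  refine ⟨(f.homeomorph n).symm, fun x => (f ((f.homeomorph n).symm x) ^ n)⁻¹,
    f.contDiff_homeomorph_symm hdm n, (f.homeomorph n).symm.injective, fun _ => f.one_le_inv_pow _,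
    fun x i => ⟨f.homeomorph_symm_apply_of_lt x, f.homeomorph_symm_apply_of_le x⟩,
    fun x hx => f.homeomorph_symm_eq_self (hout x hx),
    f.rect_subset_homeomorph_symm_image E.n_ne_zero hL hrl0.le hrl1 hin hτ (hδ m (by simp)).2.2,
    fun ω hω hQω hthick u hu => ⟨?_, ?_⟩⟩
  · exact hC₀ _ MQ δ τ f (le_max_right _ _) hτ hδ_one.1 (hδ MQ (by simp)).1 _ ω hQ hω hQω hin hMQ
      hthick u hu
  · exact f.eLpNorm_comp_preimage_le hdm E.two_le hp hτ hδ_one.2.1 hQ hω hQω hin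
      (le_max_left _ _) u

/-- **Shrinking construction (building block, case `0 < s < 1`).** -/
theorem shrinking_block_fractional
    (m ν : ℕ) (s p : ℝ) (hs0 : 0 < s) (hs1 : s < 1) (hp : 1 ≤ p)
    (d : ℕ) (hd1 : 1 ≤ d) (hdm : d ≤ m) (hdsp : s * p < d)
    (rlow rup : ℝ) (hrl0 : 0 < rlow) (hrl1 : rlow < 1) (hru0 : 0 < rup) (hru1 : rup < 1)
    (c c' : ℝ) (hc : 0 < c) (hc' : 0 < c') :
    ∃ C : ℝ, 0 < C ∧
      ∀ (η μ : ℝ), 0 < η → 0 < μ → μ / rup < 1 →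
        ∀ τ : ℝ, 0 < τ → τ < rlow →
          ∃ (Φ : Eucl m → Eucl m) (lam : Eucl m → ℝ),
            ContDiff ℝ (⊤ : ℕ∞) Φ ∧ Function.Injective Φ ∧
            (∀ x, 1 ≤ lam x) ∧
            (∀ x, ∀ i : Fin m, ((i : ℕ) < d → Φ x i = lam x * x i) ∧
              (d ≤ (i : ℕ) → Φ x i = x i)) ∧
            (∀ x, x ∉ rect m d (μ * η) ((1 - μ) * η) → Φ x = x) ∧
            rect m d (rlow * μ * η) ((1 - μ / rup) * η)
              ⊆ Φ '' cylinder m d (τ * μ * η) ((1 - μ / rup) * η) ∧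
            ∀ ω : Set (Eucl m), MeasurableSet ω →
              rect m d (rlow * μ * η) ((1 - μ / rup) * η) ⊆ ω →
              ω ⊆ Metric.ball 0 (c * μ * η) →
              (∀ z ∈ ω \ rect m d (rlow * μ * η) ((1 - μ / rup) * η), ∀ t : ℝ, 0 < t →
                2 * ENNReal.ofReal t ≤ EMetric.diam ω →
                ENNReal.ofReal (c' * t ^ m) ≤
                  volume (Metric.ball z t ∩ (ω \ rect m d (rlow * μ * η) ((1 - μ / rup) * η)))) →
              ∀ u : Eucl m → Eucl ν, Measurable u →
                gagliardoSeminorm m s p (Φ ⁻¹' ω) (fun x => u (Φ x))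
                  ≤ ENNReal.ofReal C *
                      gagliardoSeminorm m s p (ω \ rect m d (rlow * μ * η) ((1 - μ / rup) * η)) u
                    + ENNReal.ofReal (C * τ ^ ((d - s * p) / p)) * gagliardoSeminorm m s p ω u ∧
                eLpNorm (fun x => u (Φ x)) (ENNReal.ofReal p) (volume.restrict (Φ ⁻¹' ω))
                  ≤ ENNReal.ofReal C *
                      eLpNorm u (ENNReal.ofReal p)
                        (volume.restrict (ω \ rect m d (rlow * μ * η) ((1 - μ / rup) * η)))
                    + ENNReal.ofReal (C * τ ^ ((d : ℝ) / p)) *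
                        eLpNorm u (ENNReal.ofReal p) (volume.restrict ω) := by
  obtain ⟨C, hC, h⟩ := shrinking_block_fractional_general (F := Eucl ν) m s p hs0.le hp d hdm hdsp
    rlow rup hrl0 hrl1 hru0 hru1 c' hc'
  refine ⟨C, hC, fun η μ hη hμ hμr τ hτ _ => ?_⟩
  obtain ⟨Φ, lam, hsmooth, hinj, hlam, hform, hsupp, himage, hbound⟩ := h η μ hη hμ hμr τ hτ
  exact ⟨Φ, lam, hsmooth, hinj, hlam, hform, hsupp, himage, fun ω hω hQω _ hthick u hu =>
    hbound ω hω hQω hthick u hu.stronglyMeasurable⟩
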